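/- arXiv:1301.0726 — 3 statements merged into one kernel-verified Lean document; each statement's English description precedes it below -/
import Mathlib

section
/- Let (U_i)_{i∈ℕ} be an α-mixing sequence of identically U[0,1]-distributed random variables with mixing coefficients (α(n)), let Ĝ_n(t) := (1/n)·#{1 ≤ i ≤ n : U_i ≤ t}, let r ∈ [0, 1/2), C > 0 and ϑ > 2r, and suppose α(n) ≤ C·n^{−ϑ} for all n ∈ ℕ. Then n^r · sup_{t∈[0,1]} |Ĝ_n(t) − t| → 0 ℙ-almost surely as n → ∞. -/
open MeasureTheory Filter Set

/-- The empirical distribution function of `U 0, …, U (n-1)` evaluated at `t`. -/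
noncomputable def empDF {Ω : Type*} (U : ℕ → Ω → ℝ) (n : ℕ) (ω : Ω) (t : ℝ) : ℝ :=
  (((Finset.range n).filter fun i => U i ω ≤ t).card : ℝ) / n

/-- α-mixing coefficients of a sequence of real random variables. -/
noncomputable def alphaCoef {Ω : Type*} [MeasurableSpace Ω] (P : Measure Ω)
    (U : ℕ → Ω → ℝ) (n : ℕ) : ℝ :=
  sSup { c : ℝ | ∃ (k : ℕ) (A B : Set Ω),
    MeasurableSet[⨆ i ∈ {i : ℕ | i ≤ k}, MeasurableSpace.comap (U i) Real.measurableSpace] A ∧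
    MeasurableSet[⨆ i ∈ {i : ℕ | k + n ≤ i}, MeasurableSpace.comap (U i) Real.measurableSpace] B ∧
    c = |(P (A ∩ B)).toReal - (P A).toReal * (P B).toReal| }

lemma dyadic_telescope (F : ℕ → ℝ) (h0 : F 0 = 0) (K n : ℕ) (hn : n ≤ 2 ^ K) :
    F n ^ 2 ≤ (K + 1) * ∑ m ∈ Finset.range (K + 1), ∑ q ∈ Finset.range (2 ^ (K - m)),
      (F (2 ^ m * (q + 1)) - F (2 ^ m * q)) ^ 2 := by
  have hlt : n < 2 ^ (K + 1) := by
    have : 2 ^ K < 2 ^ (K + 1) := Nat.pow_lt_pow_right (by norm_num) (by omega)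
    omega
  have htel : F n = ∑ m ∈ Finset.range (K + 1),
      (F (2 ^ m * (n / 2 ^ m)) - F (2 ^ (m + 1) * (n / 2 ^ (m + 1)))) := by
    rw [Finset.sum_range_sub' (fun m => F (2 ^ m * (n / 2 ^ m)))]
    simp [Nat.div_eq_of_lt hlt, h0]
  rw [htel]
  refine (sq_sum_le_card_mul_sum_sq).trans ?_
  rw [Finset.card_range]
  push_cast
  refine mul_le_mul_of_nonneg_left ?_ (by positivity)
  refine Finset.sum_le_sum fun m hm => ?_
  have hmK : m ≤ K := by simpa [Nat.lt_succ_iff] using hm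
  have hdiv : n / 2 ^ (m + 1) = n / 2 ^ m / 2 := by
    rw [pow_succ, Nat.div_div_eq_div_mul]
  rw [hdiv]
  have hle : n / 2 ^ m ≤ 2 ^ (K - m) := by
    rw [← Nat.pow_div hmK (by norm_num)]
    exact Nat.div_le_div_right hn
  generalize n / 2 ^ m = c at hle ⊢
  rcases Nat.even_or_odd' c with ⟨b, rfl | rfl⟩
  · have : 2 ^ (m + 1) * (2 * b / 2) = 2 ^ m * (2 * b) := by
      rw [Nat.mul_div_cancel_left _ (by norm_num), pow_succ]; ring
    rw [this]
    simp only [sub_self]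
    rw [zero_pow (by norm_num)]
    exact Finset.sum_nonneg fun _ _ => sq_nonneg _
  · have : 2 ^ (m + 1) * ((2 * b + 1) / 2) = 2 ^ m * (2 * b) := by
      rw [show (2 * b + 1) / 2 = b by omega, pow_succ]; ring
    rw [this]
    exact Finset.single_le_sum
      (f := fun q => (F (2 ^ m * (q + 1)) - F (2 ^ m * q)) ^ 2)
      (fun _ _ => sq_nonneg _) (Finset.mem_range.2 (by omega : 2 * b < _))

lemma sign_choice {ι : Type*} [DecidableEq ι] (c : ι → ι → ℝ) (s : Finset ι) :
    ∃ A B : Finset ι, ∑ p ∈ s, c p p ≤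
      ∑ p ∈ A, ∑ q ∈ A, c p q + ∑ p ∈ B, ∑ q ∈ B, c p q
        - ∑ p ∈ A, ∑ q ∈ B, c p q - ∑ p ∈ B, ∑ q ∈ A, c p q := by
  suffices h : ∃ A B : Finset ι, A ⊆ s ∧ B ⊆ s ∧ ∑ p ∈ s, c p p ≤
      ∑ p ∈ A, ∑ q ∈ A, c p q + ∑ p ∈ B, ∑ q ∈ B, c p q
        - ∑ p ∈ A, ∑ q ∈ B, c p q - ∑ p ∈ B, ∑ q ∈ A, c p q by
    obtain ⟨A, B, -, -, h⟩ := h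
    exact ⟨A, B, h⟩
  induction s using Finset.induction_on with
  | empty => exact ⟨∅, ∅, by simp⟩
  | insert a s ha ih =>
    obtain ⟨A, B, hA, hB, h⟩ := ih
    have haA : a ∉ A := fun h => ha (hA h)
    have haB : a ∉ B := fun h => ha (hB h)
    rcases le_total 0 (∑ q ∈ A, c a q + ∑ p ∈ A, c p a - ∑ q ∈ B, c a q - ∑ p ∈ B, c p a)
      with h' | h'
    · refine ⟨insert a A, B, Finset.insert_subset_insert _ hA,
        hB.trans (Finset.subset_insert _ _), ?_⟩
      simp only [Finset.sum_insert ha, Finset.sum_insert haA, Finset.sum_add_distrib]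
      linarith
    · refine ⟨A, insert a B, hA.trans (Finset.subset_insert _ _),
        Finset.insert_subset_insert _ hB, ?_⟩
      simp only [Finset.sum_insert ha, Finset.sum_insert haB, Finset.sum_add_distrib]
      linarith

section
variable {Ω : Type*} [MeasurableSpace Ω] (P : Measure Ω) [IsProbabilityMeasure P]
    (U : ℕ → Ω → ℝ)

lemma alpha_bound (k n : ℕ) (S T : Set ℝ) (hS : MeasurableSet S) (hT : MeasurableSet T) :
    |P.real (U k ⁻¹' S ∩ U (k + n) ⁻¹' T) - P.real (U k ⁻¹' S) * P.real (U (k + n) ⁻¹' T)|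
      ≤ alphaCoef P U n := by
  refine le_csSup ⟨1, ?_⟩ ⟨k, U k ⁻¹' S, U (k + n) ⁻¹' T, ?_, ?_, rfl⟩
  · rintro c ⟨k, A, B, -, -, rfl⟩
    have h1 : P.real (A ∩ B) ≤ 1 := measureReal_le_one
    have h2 : P.real A ≤ 1 := measureReal_le_one
    have h3 : P.real B ≤ 1 := measureReal_le_one
    have h4 : 0 ≤ P.real (A ∩ B) := measureReal_nonneg
    have h5 : 0 ≤ P.real A := measureReal_nonneg
    have h6 : 0 ≤ P.real B := measureReal_nonneg
    change |P.real (A ∩ B) - P.real A * P.real B| ≤ 1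
    rw [abs_le]
    constructor <;> nlinarith [mul_nonneg h5 h6]
  · have hle : MeasurableSpace.comap (U k) Real.measurableSpace ≤
        ⨆ i ∈ {i : ℕ | i ≤ k}, MeasurableSpace.comap (U i) Real.measurableSpace :=
      le_iSup₂_of_le k (by simp) le_rfl
    exact hle _ ⟨S, hS, rfl⟩
  · have hle : MeasurableSpace.comap (U (k + n)) Real.measurableSpace ≤
        ⨆ i ∈ {i : ℕ | k + n ≤ i}, MeasurableSpace.comap (U i) Real.measurableSpace :=
      le_iSup₂_of_le (k + n) (by simp) le_rfl
    exact hle _ ⟨T, hT, rfl⟩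

lemma alpha_nonneg (n : ℕ) : 0 ≤ alphaCoef P U n :=
  (abs_nonneg _).trans (alpha_bound P U 0 n ∅ ∅ MeasurableSet.empty MeasurableSet.empty)

lemma prob_union (hmeas : ∀ i, Measurable (U i)) (E : ℕ → Set ℝ) (hE : ∀ p, MeasurableSet (E p))
    (hd : Pairwise (Function.onFun Disjoint E)) (D : Set Ω) (hD : MeasurableSet D)
    (i : ℕ) (A : Finset ℕ) :
    P.real (U i ⁻¹' (⋃ p ∈ A, E p) ∩ D) = ∑ p ∈ A, P.real (U i ⁻¹' E p ∩ D) := by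
  rw [preimage_iUnion₂, iUnion₂_inter, measureReal_biUnion_finset]
  · intro p _ q _ hpq
    exact ((hd hpq).preimage _).mono inter_subset_left inter_subset_left
  · intro p _
    exact (hmeas i (hE p)).inter hD

lemma cov_union (hmeas : ∀ i, Measurable (U i)) (E : ℕ → Set ℝ) (hE : ∀ p, MeasurableSet (E p))
    (hd : Pairwise (Function.onFun Disjoint E)) (i j : ℕ) (A B : Finset ℕ) :
    ∑ p ∈ A, ∑ q ∈ B, (P.real (U i ⁻¹' E p ∩ U j ⁻¹' E q)
      - P.real (U i ⁻¹' E p) * P.real (U j ⁻¹' E q)) =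
    P.real (U i ⁻¹' (⋃ p ∈ A, E p) ∩ U j ⁻¹' (⋃ p ∈ B, E p))
      - P.real (U i ⁻¹' (⋃ p ∈ A, E p)) * P.real (U j ⁻¹' (⋃ p ∈ B, E p)) := by
  have h1 := fun i A => prob_union P U hmeas E hE hd univ MeasurableSet.univ i A
  simp only [inter_univ] at h1
  have hB : MeasurableSet (⋃ p ∈ B, E p) := Finset.measurableSet_biUnion _ fun p _ => hE p
  rw [prob_union P U hmeas E hE hd _ (hmeas j hB), h1, h1, Finset.sum_mul_sum,
    ← Finset.sum_sub_distrib]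
  refine Finset.sum_congr rfl fun p _ => ?_
  rw [Finset.sum_sub_distrib, inter_comm, prob_union P U hmeas E hE hd _ (hmeas i (hE p))]
  simp only [inter_comm]

/-- Rio's trick: the sum of covariances over disjoint sets is bounded by the mixing coefficient. -/
lemma cov_sum (hmeas : ∀ i, Measurable (U i)) (E : ℕ → Set ℝ) (hE : ∀ p, MeasurableSet (E p))
    (hd : Pairwise (Function.onFun Disjoint E)) (k n : ℕ) (s : Finset ℕ) :
    ∑ p ∈ s, (P.real (U k ⁻¹' E p ∩ U (k + n) ⁻¹' E p)
      - P.real (U k ⁻¹' E p) * P.real (U (k + n) ⁻¹' E p)) ≤ 4 * alphaCoef P U n := by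
  obtain ⟨A, B, h⟩ := sign_choice (fun p q => P.real (U k ⁻¹' E p ∩ U (k + n) ⁻¹' E q)
      - P.real (U k ⁻¹' E p) * P.real (U (k + n) ⁻¹' E q)) s
  simp only [cov_union P U hmeas E hE hd] at h
  have hm : ∀ A : Finset ℕ, MeasurableSet (⋃ p ∈ A, E p) :=
    fun A => Finset.measurableSet_biUnion _ fun p _ => hE p
  have key := fun A B : Finset ℕ => abs_le.1 (alpha_bound P U k n _ _ (hm A) (hm B))
  linarith [(key A A).2, (key B B).2, (key A B).1, (key B A).1]

noncomputable def betaC (d : ℕ) : ℝ := if d = 0 then 1 else 4 * alphaCoef P U d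

lemma betaC_nonneg (d : ℕ) : 0 ≤ betaC P U d := by
  unfold betaC
  split_ifs
  · norm_num
  · linarith [alpha_nonneg P U d]

lemma cov_sum_le (hmeas : ∀ i, Measurable (U i)) (E : ℕ → Set ℝ) (hE : ∀ p, MeasurableSet (E p))
    (hd : Pairwise (Function.onFun Disjoint E)) (i j : ℕ) (s : Finset ℕ) :
    ∑ p ∈ s, (P.real (U i ⁻¹' E p ∩ U j ⁻¹' E p)
      - P.real (U i ⁻¹' E p) * P.real (U j ⁻¹' E p)) ≤ betaC P U ((i - j) + (j - i)) := by
  rcases lt_trichotomy i j with h | rfl | h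
  · obtain ⟨d, rfl⟩ := Nat.exists_eq_add_of_lt h
    have := cov_sum P U hmeas E hE hd i (d + 1) s
    have e : i - (i + d + 1) + (i + d + 1 - i) = d + 1 := by omega
    rw [e, betaC, if_neg (by omega)]
    exact this
  · simp only [betaC, Nat.sub_self, Nat.add_zero, if_true]
    have h1 := prob_union P U hmeas E hE hd univ MeasurableSet.univ i s
    simp only [inter_univ] at h1
    have h2 : P.real (U i ⁻¹' (⋃ p ∈ s, E p)) ≤ 1 := measureReal_le_one
    rw [h1] at h2
    refine le_trans (Finset.sum_le_sum fun p _ => ?_) h2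
    rw [inter_self]
    nlinarith [measureReal_nonneg (μ := P) (s := U i ⁻¹' E p)]
  · obtain ⟨d, rfl⟩ := Nat.exists_eq_add_of_lt h
    have := cov_sum P U hmeas E hE hd j (d + 1) s
    have e : (j + d + 1) - j + (j - (j + d + 1)) = d + 1 := by omega
    rw [e, betaC, if_neg (by omega)]
    refine le_trans (le_of_eq ?_) this
    refine Finset.sum_congr rfl fun p _ => ?_
    rw [inter_comm, mul_comm]
    rfl

lemma sum_beta (β : ℕ → ℝ) (hβ : ∀ d, 0 ≤ β d) (a N i : ℕ) (hi : i ∈ Finset.Ico a (a + N)) :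
    ∑ j ∈ Finset.Ico a (a + N), β ((i - j) + (j - i)) ≤ 2 * ∑ d ∈ Finset.range N, β d := by
  rw [Finset.mem_Ico] at hi
  rw [← Finset.sum_filter_add_sum_filter_not _ (fun j => j ≤ i), two_mul]
  refine add_le_add ?_ ?_
  · rw [← Finset.sum_image (s := (Finset.Ico a (a + N)).filter (fun j => j ≤ i)) (f := β)
      (g := fun j => (i - j) + (j - i))]
    · refine Finset.sum_le_sum_of_subset_of_nonneg ?_ fun _ _ _ => hβ _
      intro x hx
      simp only [Finset.mem_image, Finset.mem_filter, Finset.mem_Ico, Finset.mem_range] at hx ⊢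
      obtain ⟨y, hy, rfl⟩ := hx
      omega
    · intro x hx y hy hxy
      simp only [Finset.coe_filter, Finset.mem_Ico, Set.mem_ofPred_eq] at hx hy hxy
      omega
  · rw [← Finset.sum_image (s := (Finset.Ico a (a + N)).filter (fun j => ¬ j ≤ i)) (f := β)
      (g := fun j => (i - j) + (j - i))]
    · refine Finset.sum_le_sum_of_subset_of_nonneg ?_ fun _ _ _ => hβ _
      intro x hx
      simp only [Finset.mem_image, Finset.mem_filter, Finset.mem_Ico, Finset.mem_range] at hx ⊢
      obtain ⟨y, hy, rfl⟩ := hx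
      omega
    · intro x hx y hy hxy
      simp only [Finset.coe_filter, Finset.mem_Ico, Set.mem_ofPred_eq] at hx hy hxy
      omega

/-- centred indicator -/
noncomputable def cind (E : Set ℝ) (v : ℝ) (x : ℝ) : ℝ := E.indicator (fun _ => (1 : ℝ)) x - v

lemma cind_meas (E : Set ℝ) (hE : MeasurableSet E) (v : ℝ) : Measurable (cind E v) :=
  (measurable_const.indicator hE).sub_const v

lemma cind_mul_integral (hmeas : ∀ i, Measurable (U i)) (E : Set ℝ) (hE : MeasurableSet E) (v : ℝ)
    (hv : ∀ i, P.real (U i ⁻¹' E) = v) (i j : ℕ) :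
    Integrable (fun ω => cind E v (U i ω) * cind E v (U j ω)) P ∧
    ∫ ω, cind E v (U i ω) * cind E v (U j ω) ∂P =
      P.real (U i ⁻¹' E ∩ U j ⁻¹' E) - P.real (U i ⁻¹' E) * P.real (U j ⁻¹' E) := by
  have e : (fun ω => cind E v (U i ω) * cind E v (U j ω)) = fun ω =>
      (U i ⁻¹' E ∩ U j ⁻¹' E).indicator (fun _ => (1 : ℝ)) ω
        - v * (U i ⁻¹' E).indicator (fun _ => (1 : ℝ)) ω
        - v * (U j ⁻¹' E).indicator (fun _ => (1 : ℝ)) ω + v * v := by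
    funext ω
    by_cases h1 : U i ω ∈ E <;> by_cases h2 : U j ω ∈ E <;>
      simp [cind, h1, h2, Set.indicator] <;> ring
  have hi := hmeas i hE
  have hj := hmeas j hE
  have I : ∀ S : Set Ω, MeasurableSet S → Integrable (S.indicator (fun _ => (1 : ℝ))) P :=
    fun S hS => (integrable_const _).indicator hS
  have J : ∀ S : Set Ω, MeasurableSet S → ∫ ω, S.indicator (fun _ => (1 : ℝ)) ω ∂P = P.real S := by
    intro S hS
    rw [integral_indicator_const _ hS]; simp
  rw [e]
  have i1 := I _ (hi.inter hj)
  have i2 := (I _ hi).const_mul v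
  have i3 := (I _ hj).const_mul v
  refine ⟨((i1.sub i2).sub i3).add (integrable_const _), ?_⟩
  have i12 : Integrable (fun ω => (U i ⁻¹' E ∩ U j ⁻¹' E).indicator (fun _ => (1 : ℝ)) ω
        - v * (U i ⁻¹' E).indicator (fun _ => (1 : ℝ)) ω) P := i1.sub i2
  have i123 : Integrable (fun ω => (U i ⁻¹' E ∩ U j ⁻¹' E).indicator (fun _ => (1 : ℝ)) ω
        - v * (U i ⁻¹' E).indicator (fun _ => (1 : ℝ)) ω
        - v * (U j ⁻¹' E).indicator (fun _ => (1 : ℝ)) ω) P := i12.sub i3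
  rw [integral_add i123 (integrable_const _), integral_sub i12 i3,
    integral_sub i1 i2, integral_const_mul, integral_const_mul, J _ hi, J _ hj, J _ (hi.inter hj),
    hv, hv]
  simp

lemma block_var (hmeas : ∀ i, Measurable (U i)) (E : ℕ → Set ℝ) (hE : ∀ p, MeasurableSet (E p))
    (hd : Pairwise (Function.onFun Disjoint E)) (s : Finset ℕ) (v : ℝ)
    (hv : ∀ p ∈ s, ∀ i, P.real (U i ⁻¹' E p) = v) (a N : ℕ) :
    (∀ p ∈ s, Integrable (fun ω => (∑ i ∈ Finset.Ico a (a + N), cind (E p) v (U i ω)) ^ 2) P) ∧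
    ∑ p ∈ s, ∫ ω, (∑ i ∈ Finset.Ico a (a + N), cind (E p) v (U i ω)) ^ 2 ∂P
      ≤ N * (2 * ∑ d ∈ Finset.range N, betaC P U d) := by
  have e : ∀ p, (fun ω => (∑ i ∈ Finset.Ico a (a + N), cind (E p) v (U i ω)) ^ 2) = fun ω =>
      ∑ i ∈ Finset.Ico a (a + N), ∑ j ∈ Finset.Ico a (a + N),
        cind (E p) v (U i ω) * cind (E p) v (U j ω) := by
    intro p; funext ω; rw [sq, Finset.sum_mul_sum]
  have key := fun p hp => cind_mul_integral P U hmeas (E p) (hE p) v (hv p hp)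
  refine ⟨fun p hp => ?_, ?_⟩
  · rw [e]
    exact integrable_finsetSum _ fun i _ => integrable_finsetSum _ fun j _ => (key p hp i j).1
  · calc _ = ∑ p ∈ s, ∑ i ∈ Finset.Ico a (a + N), ∑ j ∈ Finset.Ico a (a + N),
        (P.real (U i ⁻¹' E p ∩ U j ⁻¹' E p) - P.real (U i ⁻¹' E p) * P.real (U j ⁻¹' E p)) := by
          refine Finset.sum_congr rfl fun p hp => ?_
          rw [e, integral_finsetSum _ fun i _ =>
            integrable_finsetSum _ fun j _ => (key p hp i j).1]
          refine Finset.sum_congr rfl fun i _ => ?_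
          rw [integral_finsetSum _ fun j _ => (key p hp i j).1]
          exact Finset.sum_congr rfl fun j _ => (key p hp i j).2
      _ = ∑ i ∈ Finset.Ico a (a + N), ∑ j ∈ Finset.Ico a (a + N), ∑ p ∈ s,
        (P.real (U i ⁻¹' E p ∩ U j ⁻¹' E p) - P.real (U i ⁻¹' E p) * P.real (U j ⁻¹' E p)) := by
          rw [Finset.sum_comm]
          exact Finset.sum_congr rfl fun i _ => Finset.sum_comm
      _ ≤ ∑ i ∈ Finset.Ico a (a + N), ∑ j ∈ Finset.Ico a (a + N),
          betaC P U ((i - j) + (j - i)) :=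
          Finset.sum_le_sum fun i _ => Finset.sum_le_sum fun j _ =>
            cov_sum_le P U hmeas E hE hd i j s
      _ ≤ ∑ i ∈ Finset.Ico a (a + N), (2 * ∑ d ∈ Finset.range N, betaC P U d) :=
          Finset.sum_le_sum fun i hi => sum_beta _ (betaC_nonneg P U) a N i hi
      _ = _ := by simp

noncomputable def grd (K j : ℕ) : ℝ := (j : ℝ) / 2 ^ K

lemma grd_mono (K : ℕ) : Monotone (grd K) := by
  intro i j h
  unfold grd
  gcongr

lemma grd_nonneg (K j : ℕ) : 0 ≤ grd K j := by unfold grd; positivity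

def dset (K l p : ℕ) : Set ℝ := Ioc (grd K (2 ^ l * p)) (grd K (2 ^ l * (p + 1)))

noncomputable def Vf (K : ℕ) (ω : Ω) : ℝ :=
  (K + 1) * ∑ m ∈ Finset.range (K + 1), ∑ q ∈ Finset.range (2 ^ (K - m)),
    ((K + 1) * ∑ l ∈ Finset.range (K + 1), ∑ p ∈ Finset.range (2 ^ (K - l)),
      (∑ i ∈ Finset.Ico (2 ^ m * q) (2 ^ m * q + 2 ^ m),
        cind (dset K l p) (2 ^ l / 2 ^ K) (U i ω)) ^ 2)

lemma cind_diff (K l p : ℕ) (x : ℝ) :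
    cind (Ioc 0 (grd K (2 ^ l * (p + 1)))) (grd K (2 ^ l * (p + 1))) x
      - cind (Ioc 0 (grd K (2 ^ l * p))) (grd K (2 ^ l * p)) x
      = cind (dset K l p) (2 ^ l / 2 ^ K) x := by
  have h1 : grd K (2 ^ l * (p + 1)) - grd K (2 ^ l * p) = 2 ^ l / 2 ^ K := by
    unfold grd; push_cast; ring
  have h2 : grd K (2 ^ l * p) ≤ grd K (2 ^ l * (p + 1)) := grd_mono K (by gcongr; omega)
  have h3 := grd_nonneg K (2 ^ l * p)
  unfold cind dset
  rw [← h1]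
  have : (Ioc 0 (grd K (2 ^ l * (p + 1)))).indicator (fun _ => (1 : ℝ)) x
      = (Ioc 0 (grd K (2 ^ l * p))).indicator (fun _ => (1 : ℝ)) x
      + (Ioc (grd K (2 ^ l * p)) (grd K (2 ^ l * (p + 1)))).indicator (fun _ => (1 : ℝ)) x := by
    rw [← Ioc_union_Ioc_eq_Ioc h3 h2, indicator_union_of_disjoint]
    rw [Set.disjoint_left]
    rintro y ⟨_, hy⟩ ⟨hy', _⟩
    linarith
  rw [this]; ring

lemma chain_bound (K n j : ℕ) (hn : n ≤ 2 ^ K) (hj : j ≤ 2 ^ K) (ω : Ω) :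
    (∑ i ∈ Finset.range n, cind (Ioc 0 (grd K j)) (grd K j) (U i ω)) ^ 2 ≤ Vf U K ω := by
  refine (dyadic_telescope
    (fun n => ∑ i ∈ Finset.range n, cind (Ioc 0 (grd K j)) (grd K j) (U i ω)) (by simp)
    K n hn).trans ?_
  unfold Vf
  refine mul_le_mul_of_nonneg_left ?_ (by positivity)
  refine Finset.sum_le_sum fun m _ => Finset.sum_le_sum fun q _ => ?_
  rw [← Finset.sum_Ico_eq_sub _ (by gcongr; omega), mul_add, mul_one]
  refine (dyadic_telescope
    (fun j => ∑ i ∈ Finset.Ico (2 ^ m * q) (2 ^ m * q + 2 ^ m),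
      cind (Ioc 0 (grd K j)) (grd K j) (U i ω)) (by simp [grd, cind])
    K j hj).trans ?_
  refine mul_le_mul_of_nonneg_left ?_ (by positivity)
  refine Finset.sum_le_sum fun l _ => Finset.sum_le_sum fun p _ => ?_
  rw [← Finset.sum_sub_distrib]
  simp only [cind_diff]
  exact le_rfl

lemma dset_disj (K l : ℕ) : Pairwise (Function.onFun Disjoint (dset K l)) := by
  have hm : Monotone (fun p => grd K (2 ^ l * p)) := fun a b h => grd_mono K (by gcongr)
  have := hm.pairwise_disjoint_on_Ioc_succ
  exact this

lemma dset_prob (hmeas : ∀ i, Measurable (U i))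
    (hunif : ∀ i, Measure.map (U i) P = volume.restrict (Set.Icc (0 : ℝ) 1))
    (K l p : ℕ) (hl : l ≤ K) (hp : p < 2 ^ (K - l)) (i : ℕ) :
    P.real (U i ⁻¹' dset K l p) = 2 ^ l / 2 ^ K := by
  have hm : MeasurableSet (dset K l p) := measurableSet_Ioc
  have hsub : dset K l p ⊆ Icc 0 1 := by
    rintro x ⟨h1, h2⟩
    refine ⟨(grd_nonneg K _).trans h1.le, h2.trans ?_⟩
    have h3 : 2 ^ l * (p + 1) ≤ 2 ^ K := by
      calc 2 ^ l * (p + 1) ≤ 2 ^ l * 2 ^ (K - l) := by gcongr; omega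
        _ = 2 ^ K := by rw [← pow_add]; congr 1; omega
    unfold grd
    rw [div_le_one (by positivity)]
    exact_mod_cast h3
  rw [← map_measureReal_apply (hmeas i) hm, hunif, measureReal_restrict_apply hm,
    inter_eq_left.2 hsub, dset, Real.volume_real_Ioc_of_le (grd_mono K (by gcongr; omega))]
  unfold grd; push_cast; ring

lemma Vf_bound (hmeas : ∀ i, Measurable (U i))
    (hunif : ∀ i, Measure.map (U i) P = volume.restrict (Set.Icc (0 : ℝ) 1)) (K : ℕ) :
    Integrable (Vf U K) P ∧
    ∫ ω, Vf U K ω ∂P ≤ (K + 1) ^ 4 * 2 ^ K * (2 * ∑ d ∈ Finset.range (2 ^ K), betaC P U d) := by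
  set B := ∑ d ∈ Finset.range (2 ^ K), betaC P U d with hB
  have key := fun m q l (hl : l ∈ Finset.range (K + 1)) =>
    block_var P U hmeas (dset K l) (fun _ => measurableSet_Ioc)
    (dset_disj K l) (Finset.range (2 ^ (K - l))) (2 ^ l / 2 ^ K)
    (fun p hp i => dset_prob P U hmeas hunif K l p (by simpa [Nat.lt_succ_iff] using hl)
      (by simpa using hp) i) (2 ^ m * q) (2 ^ m)
  have I3 : ∀ m q l, l ∈ Finset.range (K + 1) → Integrable (fun ω =>
      ∑ p ∈ Finset.range (2 ^ (K - l)),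
      (∑ i ∈ Finset.Ico (2 ^ m * q) (2 ^ m * q + 2 ^ m),
        cind (dset K l p) (2 ^ l / 2 ^ K) (U i ω)) ^ 2) P :=
    fun m q l hl => integrable_finsetSum _ fun p hp => (key m q l hl).1 p hp
  have I2 : ∀ m q, Integrable (fun ω => (K + 1 : ℝ) *
      ∑ l ∈ Finset.range (K + 1), ∑ p ∈ Finset.range (2 ^ (K - l)),
      (∑ i ∈ Finset.Ico (2 ^ m * q) (2 ^ m * q + 2 ^ m),
        cind (dset K l p) (2 ^ l / 2 ^ K) (U i ω)) ^ 2) P :=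
    fun m q => (integrable_finsetSum _ fun l hl => I3 m q l hl).const_mul _
  have I1 : ∀ m, Integrable (fun ω => ∑ q ∈ Finset.range (2 ^ (K - m)), ((K + 1 : ℝ) *
      ∑ l ∈ Finset.range (K + 1), ∑ p ∈ Finset.range (2 ^ (K - l)),
      (∑ i ∈ Finset.Ico (2 ^ m * q) (2 ^ m * q + 2 ^ m),
        cind (dset K l p) (2 ^ l / 2 ^ K) (U i ω)) ^ 2)) P :=
    fun m => integrable_finsetSum _ fun q _ => I2 m q
  refine ⟨(integrable_finsetSum _ fun m _ => I1 m).const_mul _, ?_⟩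
  unfold Vf
  rw [integral_const_mul, integral_finsetSum _ fun m _ => I1 m]
  have hb : ∀ m ∈ Finset.range (K + 1), ∫ ω, ∑ q ∈ Finset.range (2 ^ (K - m)), ((K + 1 : ℝ) *
      ∑ l ∈ Finset.range (K + 1), ∑ p ∈ Finset.range (2 ^ (K - l)),
      (∑ i ∈ Finset.Ico (2 ^ m * q) (2 ^ m * q + 2 ^ m),
        cind (dset K l p) (2 ^ l / 2 ^ K) (U i ω)) ^ 2) ∂P ≤ (K + 1) ^ 2 * 2 ^ K * (2 * B) := by
    intro m hm
    have hmK : m ≤ K := by simpa [Nat.lt_succ_iff] using hm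
    rw [integral_finsetSum _ fun q _ => I2 m q]
    have hq : ∀ q ∈ Finset.range (2 ^ (K - m)), ∫ ω, ((K + 1 : ℝ) *
      ∑ l ∈ Finset.range (K + 1), ∑ p ∈ Finset.range (2 ^ (K - l)),
      (∑ i ∈ Finset.Ico (2 ^ m * q) (2 ^ m * q + 2 ^ m),
        cind (dset K l p) (2 ^ l / 2 ^ K) (U i ω)) ^ 2) ∂P
        ≤ (K + 1) ^ 2 * (2 ^ m * (2 * B)) := by
      intro q _
      rw [integral_const_mul, integral_finsetSum _ fun l hl => I3 m q l hl, sq, mul_assoc]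
      refine mul_le_mul_of_nonneg_left ?_ (by positivity)
      have hl : ∀ l ∈ Finset.range (K + 1), ∫ ω, ∑ p ∈ Finset.range (2 ^ (K - l)),
        (∑ i ∈ Finset.Ico (2 ^ m * q) (2 ^ m * q + 2 ^ m),
        cind (dset K l p) (2 ^ l / 2 ^ K) (U i ω)) ^ 2 ∂P ≤ 2 ^ m * (2 * B) := by
        intro l hl
        rw [integral_finsetSum _ fun p hp => (key m q l hl).1 p hp]
        refine (key m q l hl).2.trans ?_
        push_cast
        gcongr
        rw [hB]
        refine Finset.sum_le_sum_of_subset_of_nonneg ?_ fun _ _ _ => betaC_nonneg P U _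
        rw [Finset.range_subset_range]
        exact Nat.pow_le_pow_right (by norm_num) hmK
      refine (Finset.sum_le_sum hl).trans (le_of_eq ?_)
      simp
    refine (Finset.sum_le_sum hq).trans (le_of_eq ?_)
    have : (2 : ℝ) ^ K = 2 ^ (K - m) * 2 ^ m := by rw [← pow_add]; congr 1; omega
    rw [this]
    simp
    ring
  have := Finset.sum_le_sum hb
  simp only [Finset.sum_const, Finset.card_range, nsmul_eq_mul] at this
  push_cast at this
  calc _ ≤ (K + 1 : ℝ) * ((K + 1) * ((K + 1) ^ 2 * 2 ^ K * (2 * B))) :=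
        mul_le_mul_of_nonneg_left this (by positivity)
    _ = _ := by ring

lemma betaC_sum (C ϑ : ℝ) (hC : 0 < C) (hϑ1 : ϑ ≤ 1)
    (hα : ∀ n : ℕ, 1 ≤ n → alphaCoef P U n ≤ C * (n : ℝ) ^ (-ϑ)) (K : ℕ) :
    ∑ d ∈ Finset.range (2 ^ K), betaC P U d
      ≤ (1 + 8 * C) * ((2 : ℝ) ^ K) ^ (1 - ϑ) * (K + 1) := by
  have h : ∀ d ∈ Finset.range (2 ^ K), betaC P U d ≤
      (1 + 8 * C) * ((2 : ℝ) ^ K) ^ (1 - ϑ) * ((d + 1 : ℕ) : ℝ)⁻¹ := by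
    intro d hd
    rw [Finset.mem_range] at hd
    have h1 : (1 : ℝ) ≤ ((2 : ℝ) ^ K) ^ (1 - ϑ) :=
      Real.one_le_rpow (one_le_pow₀ (by norm_num)) (by linarith)
    unfold betaC
    split_ifs with h0
    · subst h0; simp; nlinarith
    · have hd1 : 1 ≤ d := Nat.one_le_iff_ne_zero.2 h0
      have hd1' : (1 : ℝ) ≤ d := by exact_mod_cast hd1
      have hd2 : (d : ℝ) ≤ 2 ^ K := by exact_mod_cast hd.le
      have h2 : (d : ℝ) ^ (1 - ϑ) ≤ ((2 : ℝ) ^ K) ^ (1 - ϑ) :=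
        Real.rpow_le_rpow (by linarith) hd2 (by linarith)
      have h3 : (d : ℝ) ^ (-ϑ) = (d : ℝ) ^ (1 - ϑ) * (d : ℝ)⁻¹ := by
        rw [← Real.rpow_neg_one, ← Real.rpow_add (by linarith)]; congr 1; ring
      have h4 : (d : ℝ)⁻¹ ≤ 2 * ((d + 1 : ℕ) : ℝ)⁻¹ := by
        push_cast
        rw [← div_eq_mul_inv, inv_eq_one_div, div_le_div_iff₀ (by linarith) (by linarith)]
        linarith
      have h5 : (d : ℝ) ^ (-ϑ) ≤ ((2 : ℝ) ^ K) ^ (1 - ϑ) * (2 * ((d + 1 : ℕ) : ℝ)⁻¹) := by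
        rw [h3]; gcongr
      have h6 := hα d hd1
      have h7 : (0 : ℝ) ≤ ((2 : ℝ) ^ K) ^ (1 - ϑ) * ((d + 1 : ℕ) : ℝ)⁻¹ := by positivity
      have h8 := mul_le_mul_of_nonneg_left h5 hC.le
      nlinarith
  refine (Finset.sum_le_sum h).trans ?_
  rw [← Finset.mul_sum]
  refine mul_le_mul_of_nonneg_left ?_ (by positivity)
  have := harmonic_le_one_add_log (2 ^ K)
  simp only [harmonic] at this
  push_cast at this ⊢
  refine this.trans ?_
  rw [Real.log_pow]
  have : Real.log 2 ≤ 1 := by linarith [Real.log_two_lt_d9]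
  nlinarith [(Nat.cast_nonneg K : (0 : ℝ) ≤ K)]

lemma Vf_nonneg (K : ℕ) (ω : Ω) : 0 ≤ Vf U K ω := by
  unfold Vf; positivity

noncomputable def Wf (r : ℝ) (K : ℕ) (ω : Ω) : ℝ := Vf U K ω * ((2 : ℝ) ^ K) ^ (-(2 * (1 - r)))

lemma W_tendsto (hmeas : ∀ i, Measurable (U i))
    (hunif : ∀ i, Measure.map (U i) P = volume.restrict (Set.Icc (0 : ℝ) 1))
    (r C ϑ : ℝ) (hC : 0 < C) (hϑ1 : ϑ ≤ 1) (hϑ : 2 * r < ϑ)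
    (hα : ∀ n : ℕ, 1 ≤ n → alphaCoef P U n ≤ C * (n : ℝ) ^ (-ϑ)) :
    ∀ᵐ ω ∂P, Tendsto (fun K => Wf U r K ω) atTop (nhds 0) := by
  set c : ℝ := (2 : ℝ) ^ (2 * r - ϑ) with hc
  have hc0 : 0 < c := Real.rpow_pos_of_pos (by norm_num) _
  have hc1 : c < 1 := Real.rpow_lt_one_of_one_lt_of_neg (by norm_num) (by linarith)
  have hint : ∀ K, Integrable (Wf U r K) P := fun K =>
    (Vf_bound P U hmeas hunif K).1.mul_const _
  have hnn : ∀ K ω, 0 ≤ Wf U r K ω := fun K ω =>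
    mul_nonneg (Vf_nonneg U K ω) (by positivity)
  have hle : ∀ K, ∫ ω, Wf U r K ω ∂P ≤ 2 * (1 + 8 * C) * ((K + 1) ^ 5 * c ^ K) := by
    intro K
    unfold Wf
    rw [integral_mul_const]
    have h1 := (Vf_bound P U hmeas hunif K).2
    have h2 := betaC_sum P U C ϑ hC hϑ1 hα K
    have h3 : (2 : ℝ) ^ K * ((2 : ℝ) ^ K) ^ (1 - ϑ) * ((2 : ℝ) ^ K) ^ (-(2 * (1 - r))) = c ^ K := by
      have e : c ^ K = ((2 : ℝ) ^ K) ^ (2 * r - ϑ) := by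
        rw [hc, ← Real.rpow_natCast, ← Real.rpow_natCast, ← Real.rpow_mul (by norm_num),
          ← Real.rpow_mul (by norm_num), mul_comm]
      have hpos : (0 : ℝ) < 2 ^ K := by positivity
      rw [e]
      nth_rewrite 1 [← Real.rpow_one ((2 : ℝ) ^ K)]
      rw [← Real.rpow_add hpos, ← Real.rpow_add hpos]
      congr 1; ring
    calc _ ≤ ((K + 1) ^ 4 * 2 ^ K * (2 * ((1 + 8 * C) * ((2 : ℝ) ^ K) ^ (1 - ϑ) * (K + 1)))) *
          ((2 : ℝ) ^ K) ^ (-(2 * (1 - r))) := by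
          refine mul_le_mul_of_nonneg_right (h1.trans ?_) (by positivity)
          gcongr
      _ = 2 * (1 + 8 * C) * ((K + 1) ^ 5 *
          ((2 : ℝ) ^ K * ((2 : ℝ) ^ K) ^ (1 - ϑ) * ((2 : ℝ) ^ K) ^ (-(2 * (1 - r))))) := by ring
      _ = _ := by rw [h3]
  have hsum : Summable fun K : ℕ => 2 * (1 + 8 * C) * (((K : ℝ) + 1) ^ 5 * c ^ K) := by
    refine Summable.mul_left _ ?_
    have h := summable_pow_mul_geometric_of_norm_lt_one (R := ℝ) 5 (r := c)
      (by rw [Real.norm_of_nonneg hc0.le]; exact hc1)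
    have h' := (summable_nat_add_iff 1).2 h
    refine (h'.mul_right c⁻¹).congr fun K => ?_
    push_cast
    field_simp
    ring
  have hfin : ∫⁻ ω, ∑' K, ENNReal.ofReal (Wf U r K ω) ∂P ≠ ⊤ := by
    rw [lintegral_tsum fun K => (hint K).aestronglyMeasurable.aemeasurable.ennreal_ofReal]
    have h1 : ∀ K, ∫⁻ ω, ENNReal.ofReal (Wf U r K ω) ∂P ≤
        ENNReal.ofReal (2 * (1 + 8 * C) * (((K : ℝ) + 1) ^ 5 * c ^ K)) := by
      intro K
      rw [← ofReal_integral_eq_lintegral_ofReal (hint K) (ae_of_all _ (hnn K))]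
      exact ENNReal.ofReal_le_ofReal (hle K)
    exact ne_top_of_le_ne_top hsum.tsum_ofReal_ne_top (ENNReal.tsum_le_tsum h1)
  have hae := ae_lt_top' (AEMeasurable.tsum fun K =>
    (hint K).aestronglyMeasurable.aemeasurable.ennreal_ofReal) hfin
  filter_upwards [hae] with ω hω
  have h := ENNReal.tendsto_atTop_zero_of_tsum_ne_top hω.ne
  have h2 := (ENNReal.tendsto_toReal ENNReal.zero_ne_top).comp h
  refine h2.congr fun K => ?_
  simp [ENNReal.toReal_ofReal (hnn K ω)]

lemma count_eq (K n j : ℕ) (ω : Ω) (hpos : ∀ i, 0 < U i ω) :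
    (((Finset.range n).filter fun i => U i ω ≤ grd K j).card : ℝ) =
      ∑ i ∈ Finset.range n, cind (Ioc 0 (grd K j)) (grd K j) (U i ω) + n * grd K j := by
  unfold cind
  rw [Finset.sum_sub_distrib, Finset.card_filter]
  simp [Set.indicator, hpos]

lemma emp_bound (K n : ℕ) (hn1 : 1 ≤ n) (hn : n ≤ 2 ^ K) (ω : Ω) (hpos : ∀ i, 0 < U i ω)
    (t : ℝ) (ht : t ∈ Icc (0 : ℝ) 1) :
    |empDF U n ω t - t| ≤ (√(Vf U K ω) + 1) / n := by
  have hn0 : (0 : ℝ) < n := by exact_mod_cast hn1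
  have h2 : (0 : ℝ) < 2 ^ K := by positivity
  have hnK : (n : ℝ) ≤ 2 ^ K := by exact_mod_cast hn
  have hG : ∀ j, j ≤ 2 ^ K →
      |∑ i ∈ Finset.range n, cind (Ioc 0 (grd K j)) (grd K j) (U i ω)| ≤ √(Vf U K ω) :=
    fun j hj => Real.abs_le_sqrt (chain_bound U K n j hn hj ω)
  have htK : 0 ≤ t * 2 ^ K := mul_nonneg ht.1 h2.le
  have htK1 : t * 2 ^ K ≤ ((2 ^ K : ℕ) : ℝ) := by push_cast; nlinarith [ht.2]
  set j := ⌊t * 2 ^ K⌋₊ with hj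
  set j' := ⌈t * 2 ^ K⌉₊ with hj'
  have hj'K : j' ≤ 2 ^ K := Nat.ceil_le.2 htK1
  have hjj : j ≤ j' := Nat.floor_le_ceil _
  have hjK : j ≤ 2 ^ K := hjj.trans hj'K
  have a1 : (j : ℝ) ≤ t * 2 ^ K := Nat.floor_le htK
  have a2 : t * 2 ^ K < j + 1 := Nat.lt_floor_add_one _
  have a3 : t * 2 ^ K ≤ j' := Nat.le_ceil _
  have a4 : (j' : ℝ) < t * 2 ^ K + 1 := Nat.ceil_lt_add_one htK
  have g1 : grd K j ≤ t := by unfold grd; rwa [div_le_iff₀ h2]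
  have g2 : t ≤ grd K j' := by unfold grd; rwa [le_div_iff₀ h2]
  have g3 : n * (t - grd K j) ≤ 1 := by
    have e : t - grd K j = (t * 2 ^ K - j) / 2 ^ K := by unfold grd; field_simp
    rw [e, ← mul_div_assoc, div_le_one h2]
    nlinarith
  have g4 : n * (grd K j' - t) ≤ 1 := by
    have e : grd K j' - t = (j' - t * 2 ^ K) / 2 ^ K := by unfold grd; field_simp
    rw [e, ← mul_div_assoc, div_le_one h2]
    nlinarith
  have c1 : (((Finset.range n).filter fun i => U i ω ≤ grd K j).card : ℝ) ≤
      (((Finset.range n).filter fun i => U i ω ≤ t).card : ℝ) := by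
    exact_mod_cast Finset.card_le_card
      (Finset.monotone_filter_right _ fun i _ h => le_trans h g1)
  have c2 : (((Finset.range n).filter fun i => U i ω ≤ t).card : ℝ) ≤
      (((Finset.range n).filter fun i => U i ω ≤ grd K j').card : ℝ) := by
    exact_mod_cast Finset.card_le_card
      (Finset.monotone_filter_right _ fun i _ h => le_trans h g2)
  rw [count_eq U K n _ ω hpos] at c1 c2
  have b1 := abs_le.1 (hG j hjK)
  have b2 := abs_le.1 (hG j' hj'K)
  have e : empDF U n ω t - t =
      ((((Finset.range n).filter fun i => U i ω ≤ t).card : ℝ) - n * t) / n := by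
    unfold empDF; field_simp
  rw [e, abs_div, abs_of_pos hn0]
  refine div_le_div_of_nonneg_right ?_ hn0.le
  rw [abs_le]
  constructor <;> nlinarith [b1.1, b2.2]

lemma final_bound (r : ℝ) (hr0 : 0 ≤ r) (hr : r < 1 / 2) (n : ℕ) (hn1 : 1 ≤ n) (ω : Ω)
    (hpos : ∀ i, 0 < U i ω) :
    (n : ℝ) ^ r * ⨆ t : Set.Icc (0 : ℝ) 1, |empDF U n ω t - t| ≤
      2 * (√(Wf U r (Nat.log 2 n + 1) ω) + ((2 : ℝ) ^ (Nat.log 2 n + 1)) ^ (-(1 - r))) := by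
  set K := Nat.log 2 n + 1 with hK
  have hn0 : (0 : ℝ) < n := by exact_mod_cast hn1
  have h2 : (0 : ℝ) < 2 ^ K := by positivity
  have hnK : n ≤ 2 ^ K := (Nat.lt_pow_succ_log_self (by norm_num) n).le
  have hnK' : (2 : ℝ) ^ K / 2 ≤ n := by
    have : 2 ^ Nat.log 2 n ≤ n := Nat.pow_log_le_self 2 (by omega)
    have : (2 : ℝ) ^ Nat.log 2 n ≤ n := by exact_mod_cast this
    rw [hK, pow_succ]; linarith
  have hsup : (⨆ t : Set.Icc (0 : ℝ) 1, |empDF U n ω t - t|) ≤ (√(Vf U K ω) + 1) / n :=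
    Real.iSup_le (fun t => emp_bound U K n hn1 hnK ω hpos t t.2) (by positivity)
  have hW : √(Wf U r K ω) = √(Vf U K ω) * ((2 : ℝ) ^ K) ^ (-(1 - r)) := by
    unfold Wf
    rw [Real.sqrt_mul (Vf_nonneg U K ω)]
    congr 1
    rw [show -(2 * (1 - r)) = -(1 - r) * (2 : ℕ) by push_cast; ring, Real.rpow_mul h2.le,
      Real.rpow_natCast, Real.sqrt_sq (by positivity)]
  have hp : (n : ℝ) ^ r / n ≤ 2 * ((2 : ℝ) ^ K) ^ (-(1 - r)) := by
    have e1 : (n : ℝ) ^ r / n = (n : ℝ) ^ (-(1 - r)) := by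
      nth_rewrite 2 [← Real.rpow_one (n : ℝ)]
      rw [← Real.rpow_sub hn0]; congr 1; ring
    rw [e1]
    refine (Real.rpow_le_rpow_of_nonpos (by positivity) hnK' (by linarith)).trans ?_
    rw [Real.div_rpow h2.le (by norm_num), div_eq_mul_inv, ← Real.rpow_neg (by norm_num), neg_neg,
      mul_comm]
    refine mul_le_mul_of_nonneg_right ?_ (by positivity)
    calc (2 : ℝ) ^ (1 - r) ≤ 2 ^ (1 : ℝ) :=
          Real.rpow_le_rpow_of_exponent_le (by norm_num) (by linarith)
      _ = 2 := Real.rpow_one _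
  calc _ ≤ (n : ℝ) ^ r * ((√(Vf U K ω) + 1) / n) :=
        mul_le_mul_of_nonneg_left hsup (by positivity)
    _ = (n : ℝ) ^ r / n * (√(Vf U K ω) + 1) := by ring
    _ ≤ 2 * ((2 : ℝ) ^ K) ^ (-(1 - r)) * (√(Vf U K ω) + 1) :=
        mul_le_mul_of_nonneg_right hp (by positivity)
    _ = _ := by rw [hW]; ring

lemma ae_pos (hmeas : ∀ i, Measurable (U i))
    (hunif : ∀ i, Measure.map (U i) P = volume.restrict (Set.Icc (0 : ℝ) 1)) :
    ∀ᵐ ω ∂P, ∀ i, 0 < U i ω := by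
  rw [ae_all_iff]
  intro i
  have h : P (U i ⁻¹' Iic 0) = 0 := by
    rw [← Measure.map_apply (hmeas i) measurableSet_Iic, hunif,
      Measure.restrict_apply measurableSet_Iic]
    refine measure_mono_null (t := {0}) ?_ (by simp)
    rintro x ⟨h1, h2, _⟩
    exact le_antisymm h1 h2
  rw [ae_iff]
  convert h using 2
  ext ω
  simp

end

/-- **Marcinkiewicz–Zygmund SLLN for the uniform empirical process of α-mixing data**
(Theorem 5 of the paper). -/
theorem mz_slln_uniform_empirical_alpha_mixing
    {Ω : Type*} [MeasurableSpace Ω] (P : Measure Ω) [IsProbabilityMeasure P]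
    (U : ℕ → Ω → ℝ) (hmeas : ∀ i, Measurable (U i))
    (hunif : ∀ i, Measure.map (U i) P = volume.restrict (Set.Icc (0 : ℝ) 1))
    (hmix : Tendsto (alphaCoef P U) atTop (nhds 0))
    (r C ϑ : ℝ) (hr0 : 0 ≤ r) (hr : r < 1 / 2) (hC : 0 < C) (hϑ : 2 * r < ϑ)
    (hα : ∀ n : ℕ, 1 ≤ n → alphaCoef P U n ≤ C * (n : ℝ) ^ (-ϑ)) :
    ∀ᵐ ω ∂P, Tendsto
      (fun n : ℕ => (n : ℝ) ^ r * ⨆ t : Set.Icc (0 : ℝ) 1, |empDF U n ω t - t|)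
      atTop (nhds 0) := by
  have hα' : ∀ n : ℕ, 1 ≤ n → alphaCoef P U n ≤ C * (n : ℝ) ^ (-(min ϑ 1)) := by
    intro n hn
    refine (hα n hn).trans (mul_le_mul_of_nonneg_left ?_ hC.le)
    exact Real.rpow_le_rpow_of_exponent_le (by exact_mod_cast hn) (neg_le_neg (min_le_left _ _))
  filter_upwards [W_tendsto P U hmeas hunif r C (min ϑ 1) hC (min_le_right _ _)
    (lt_min hϑ (by linarith)) hα', ae_pos P U hmeas hunif] with ω hW hpos
  have hlog : Tendsto (fun n : ℕ => Nat.log 2 n + 1) atTop atTop := by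
    refine tendsto_atTop.2 fun b => ?_
    filter_upwards [eventually_ge_atTop (2 ^ b)] with n hn
    exact (Nat.le_log_of_pow_le (by norm_num) hn).trans (Nat.le_succ _)
  have h1 : Tendsto (fun K => √(Wf U r K ω)) atTop (nhds 0) := by
    simpa [Function.comp_def] using (Real.continuous_sqrt.tendsto 0).comp hW
  have h2 : Tendsto (fun K : ℕ => ((2 : ℝ) ^ K) ^ (-(1 - r))) atTop (nhds 0) :=
    (tendsto_rpow_neg_atTop (by linarith : 0 < 1 - r)).comp
      (tendsto_pow_atTop_atTop_of_one_lt (by norm_num))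
  have h3 := ((h1.add h2).const_mul 2).comp hlog
  simp only [add_zero, mul_zero] at h3
  refine squeeze_zero' (Eventually.of_forall fun n => ?_) ?_ h3
  · exact mul_nonneg (by positivity) (Real.iSup_nonneg fun _ => abs_nonneg _)
  · filter_upwards [eventually_ge_atTop 1] with n hn
    exact final_bound U r hr0 hr n hn ω hpos
end

section
/- Let (U_i)_{i∈ℕ} be a sequence of identically U[0,1]-distributed random variables with α-mixing coefficients (α(n))_{n≥1}, and set α(0) := 1/4. Then for all p ∈ ℕ_0, q ∈ ℕ and x > 0: ℙ[ q^{−1/2} · sup_{t∈(0,1)} Z_{p,q}(t) ≥ x ] ≤ x^{−2} · (1 + 4·Σ_{i=0}^{q−1} α(i)) · (2 + log q)². -/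
open MeasureTheory Filter Set

/-- `Z_{p,q}(t) = |∑_{i=p+1}^{p+q} (1_{[0,t]}(U_i) - t)|` (with zero-based indexing,
the sum runs over the `q` variables `U p, …, U (p+q-1)`). -/
noncomputable def Zfun {Ω : Type*} (U : ℕ → Ω → ℝ) (p q : ℕ) (t : ℝ) (ω : Ω) : ℝ :=
  |∑ i ∈ Finset.Ico p (p + q), (Set.indicator (Set.Icc (0 : ℝ) t) (fun _ => (1 : ℝ)) (U i ω) - t)|

/-- Sign choice making off-diagonal contributions nonnegative. -/
lemma exists_signs {ι : Type*} [DecidableEq ι] (M : ι → ι → ℝ) (s : Finset ι) :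
    ∃ J : Finset ι, J ⊆ s ∧ ∑ j ∈ s, M j j ≤
      ∑ j ∈ s, ∑ m ∈ s, (if j ∈ J then (1 : ℝ) else -1) * (if m ∈ J then (1 : ℝ) else -1) * M j m := by
  induction s using Finset.induction_on with
  | empty => exact ⟨∅, by simp⟩
  | insert a s ha ih =>
    obtain ⟨J, hJs, hJ⟩ := ih
    have haJ : a ∉ J := fun h => ha (hJs h)
    set e : ι → ℝ := fun j => if j ∈ J then (1 : ℝ) else -1 with he
    set X : ℝ := ∑ m ∈ s, e m * (M a m + M m a) with hX
    by_cases h0 : 0 ≤ X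
    · refine ⟨insert a J, Finset.insert_subset_insert a hJs, ?_⟩
      have e1 : ∀ j ∈ s, (if j ∈ insert a J then (1 : ℝ) else -1) = e j := by
        intro j hj
        have : j ≠ a := fun h => ha (h ▸ hj)
        simp [he, this]
      have : ∑ j ∈ insert a s, ∑ m ∈ insert a s, (if j ∈ insert a J then (1 : ℝ) else -1) *
          (if m ∈ insert a J then (1 : ℝ) else -1) * M j m =
          M a a + X + ∑ j ∈ s, ∑ m ∈ s, e j * e m * M j m := by
        rw [Finset.sum_insert ha, Finset.sum_insert ha]
        have : ∀ j ∈ s, ∑ m ∈ insert a s, (if j ∈ insert a J then (1 : ℝ) else -1) *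
          (if m ∈ insert a J then (1 : ℝ) else -1) * M j m
            = e j * M j a + ∑ m ∈ s, e j * e m * M j m := by
          intro j hj
          rw [Finset.sum_insert ha, e1 j hj]
          congr 1
          · simp
          · exact Finset.sum_congr rfl fun m hm => by rw [e1 m hm]
        rw [Finset.sum_congr rfl this, Finset.sum_add_distrib]
        have h2 : ∑ m ∈ s, (if a ∈ insert a J then (1 : ℝ) else -1) *
          (if m ∈ insert a J then (1 : ℝ) else -1) * M a m = ∑ m ∈ s, e m * M a m :=
          Finset.sum_congr rfl fun m hm => by rw [e1 m hm]; simp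
        rw [h2, hX]
        simp only [mul_add, Finset.sum_add_distrib]
        simp
        ring
      rw [this, Finset.sum_insert ha]
      linarith
    · refine ⟨J, hJs.trans (Finset.subset_insert a s), ?_⟩
      have : ∑ j ∈ insert a s, ∑ m ∈ insert a s, e j * e m * M j m =
          M a a - X + ∑ j ∈ s, ∑ m ∈ s, e j * e m * M j m := by
        have ea : e a = -1 := by simp [he, haJ]
        simp only [Finset.sum_insert ha, Finset.sum_add_distrib, ea, hX, mul_add]
        have t1 : ∑ x ∈ s, -1 * e x * M a x = -∑ x ∈ s, e x * M a x := by
          rw [← Finset.sum_neg_distrib]; exact Finset.sum_congr rfl fun _ _ => by ring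
        have t2 : ∑ x ∈ s, e x * -1 * M x a = -∑ x ∈ s, e x * M x a := by
          rw [← Finset.sum_neg_distrib]; exact Finset.sum_congr rfl fun _ _ => by ring
        rw [t1, t2]
        ring
      change _ ≤ ∑ j ∈ insert a s, ∑ m ∈ insert a s, e j * e m * M j m
      rw [this, Finset.sum_insert ha]
      linarith

lemma trace_le {ι : Type*} [DecidableEq ι] (M : ι → ι → ℝ) (s : Finset ι) (a : ℝ)
    (h : ∀ J K : Finset ι, J ⊆ s → K ⊆ s → |∑ j ∈ J, ∑ m ∈ K, M j m| ≤ a) :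
    ∑ j ∈ s, M j j ≤ 4 * a := by
  obtain ⟨J, hJs, hJ⟩ := exists_signs M s
  refine hJ.trans ?_
  have key : ∀ f : ι → ℝ, ∑ m ∈ s, (if m ∈ J then (1 : ℝ) else -1) * f m
      = ∑ m ∈ J, f m - ∑ m ∈ s \ J, f m := by
    intro f
    rw [← Finset.sum_sdiff hJs]
    have h1 : ∑ m ∈ J, (if m ∈ J then (1 : ℝ) else -1) * f m = ∑ m ∈ J, f m :=
      Finset.sum_congr rfl fun m hm => by simp [hm]
    have h2 : ∑ m ∈ s \ J, (if m ∈ J then (1 : ℝ) else -1) * f m = - ∑ m ∈ s \ J, f m := by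
      rw [← Finset.sum_neg_distrib]
      exact Finset.sum_congr rfl fun m hm => by simp [(Finset.mem_sdiff.1 hm).2]
    rw [h1, h2]; ring
  have : ∑ j ∈ s, ∑ m ∈ s, (if j ∈ J then (1 : ℝ) else -1) * (if m ∈ J then (1 : ℝ) else -1) * M j m
      = (∑ j ∈ J, ∑ m ∈ J, M j m - ∑ j ∈ J, ∑ m ∈ s \ J, M j m) -
        (∑ j ∈ s \ J, ∑ m ∈ J, M j m - ∑ j ∈ s \ J, ∑ m ∈ s \ J, M j m) := by
    simp only [mul_assoc, ← Finset.mul_sum, key, Finset.sum_sub_distrib]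
  rw [this]
  have hd : s \ J ⊆ s := Finset.sdiff_subset
  have h1 := abs_le.1 (h J J hJs hJs)
  have h2 := abs_le.1 (h J (s \ J) hJs hd)
  have h3 := abs_le.1 (h (s \ J) J hd hJs)
  have h4 := abs_le.1 (h (s \ J) (s \ J) hd hd)
  linarith [h1.1, h1.2, h2.1, h2.2, h3.1, h3.2, h4.1, h4.2]

section prob
variable {Ω : Type*} [MeasurableSpace Ω] (P : Measure Ω) [IsProbabilityMeasure P]
  (U : ℕ → Ω → ℝ)

lemma alpha_le (n k : ℕ) (A B : Set ℝ) (hA : MeasurableSet A) (hB : MeasurableSet B) :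
    |P.real (U k ⁻¹' A ∩ U (k + n) ⁻¹' B) - P.real (U k ⁻¹' A) * P.real (U (k + n) ⁻¹' B)|
      ≤ alphaCoef P U n := by
  refine le_csSup ⟨1, ?_⟩ ⟨k, U k ⁻¹' A, U (k + n) ⁻¹' B, ?_, ?_, rfl⟩
  · rintro c ⟨k, A, B, -, -, rfl⟩
    change |P.real (A ∩ B) - P.real A * P.real B| ≤ 1
    have h1 : P.real (A ∩ B) ≤ 1 := measureReal_le_one
    have h2 : P.real A ≤ 1 := measureReal_le_one
    have h3 : P.real B ≤ 1 := measureReal_le_one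
    have h4 : 0 ≤ P.real (A ∩ B) := measureReal_nonneg
    have h5 : 0 ≤ P.real A := measureReal_nonneg
    have h6 : 0 ≤ P.real B := measureReal_nonneg
    rw [abs_le]; constructor <;> nlinarith
  · have : MeasurableSpace.comap (U k) Real.measurableSpace ≤
        ⨆ i ∈ {i : ℕ | i ≤ k}, MeasurableSpace.comap (U i) Real.measurableSpace :=
      le_iSup₂_of_le k (by simp) le_rfl
    exact this _ ⟨A, hA, rfl⟩
  · have : MeasurableSpace.comap (U (k + n)) Real.measurableSpace ≤
        ⨆ i ∈ {i : ℕ | k + n ≤ i}, MeasurableSpace.comap (U i) Real.measurableSpace :=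
      le_iSup₂_of_le (k + n) (by simp) le_rfl
    exact this _ ⟨B, hB, rfl⟩

/-- covariance of indicators -/
noncomputable def cv (i k : ℕ) (A B : Set ℝ) : ℝ :=
  P.real (U i ⁻¹' A ∩ U k ⁻¹' B) - P.real (U i ⁻¹' A) * P.real (U k ⁻¹' B)

lemma cv_comm (i k : ℕ) (A B : Set ℝ) : cv P U i k A B = cv P U k i B A := by
  simp only [cv, inter_comm, mul_comm]

lemma cv_sum (hmeas : ∀ i, Measurable (U i)) (i k : ℕ) (I : ℕ → Set ℝ)
    (hI : ∀ j, MeasurableSet (I j)) (hd : Pairwise (Function.onFun Disjoint I)) (J K : Finset ℕ) :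
    ∑ j ∈ J, ∑ m ∈ K, cv P U i k (I j) (I m) = cv P U i k (⋃ j ∈ J, I j) (⋃ m ∈ K, I m) := by
  have h1 : ∀ (i : ℕ) (J : Finset ℕ), P.real (U i ⁻¹' ⋃ j ∈ J, I j) = ∑ j ∈ J, P.real (U i ⁻¹' I j) := by
    intro i J
    rw [preimage_iUnion₂, measureReal_biUnion_finset]
    · intro a _ b _ hab
      exact (hd hab).preimage _
    · exact fun b _ => hmeas i (hI b)
  have h2 : P.real (U i ⁻¹' (⋃ j ∈ J, I j) ∩ U k ⁻¹' (⋃ m ∈ K, I m))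
      = ∑ j ∈ J, ∑ m ∈ K, P.real (U i ⁻¹' I j ∩ U k ⁻¹' I m) := by
    rw [preimage_iUnion₂, iUnion₂_inter, measureReal_biUnion_finset]
    · refine Finset.sum_congr rfl fun j _ => ?_
      rw [preimage_iUnion₂, inter_iUnion₂, measureReal_biUnion_finset]
      · intro a _ b _ hab
        exact ((hd hab).preimage _).mono inter_subset_right inter_subset_right
      · exact fun b _ => (hmeas i (hI _)).inter (hmeas k (hI b))
    · intro a _ b _ hab
      exact ((hd hab).preimage _).mono inter_subset_left inter_subset_left
    · exact fun b _ => (hmeas i (hI _)).inter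
        (hmeas k (Finset.measurableSet_biUnion _ fun m _ => hI m))
  simp only [cv, Finset.sum_sub_distrib, h2, h1, Finset.sum_mul_sum]

lemma cv_trace (hmeas : ∀ i, Measurable (U i)) (i n : ℕ) (I : ℕ → Set ℝ)
    (hI : ∀ j, MeasurableSet (I j)) (hd : Pairwise (Function.onFun Disjoint I)) (s : Finset ℕ) :
    ∑ j ∈ s, cv P U i (i + n) (I j) (I j) ≤ 4 * alphaCoef P U n := by
  refine trace_le (fun j m => cv P U i (i + n) (I j) (I m)) s _ fun J K _ _ => ?_
  rw [cv_sum P U hmeas i (i + n) I hI hd]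
  exact alpha_le P U n i _ _ (Finset.measurableSet_biUnion _ fun m _ => hI m)
    (Finset.measurableSet_biUnion _ fun m _ => hI m)

lemma cv_diag (hmeas : ∀ i, Measurable (U i)) (i : ℕ) (I : ℕ → Set ℝ)
    (hI : ∀ j, MeasurableSet (I j)) (hd : Pairwise (Function.onFun Disjoint I)) (s : Finset ℕ) :
    ∑ j ∈ s, cv P U i i (I j) (I j) ≤ 1 := by
  calc ∑ j ∈ s, cv P U i i (I j) (I j) ≤ ∑ j ∈ s, P.real (U i ⁻¹' I j) := by
        refine Finset.sum_le_sum fun j _ => ?_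
        simp only [cv, inter_self]
        nlinarith [mul_self_nonneg (P.real (U i ⁻¹' I j))]
    _ = P.real (⋃ j ∈ s, U i ⁻¹' I j) := by
        rw [measureReal_biUnion_finset]
        · intro a _ b _ hab
          exact (hd hab).preimage _
        · exact fun b _ => hmeas i (hI b)
    _ ≤ 1 := measureReal_le_one

lemma cv_row (hmeas : ∀ i, Measurable (U i)) (p q i : ℕ) (hi : i ∈ Finset.Ico p (p + q)) (I : ℕ → Set ℝ)
    (hI : ∀ j, MeasurableSet (I j)) (hd : Pairwise (Function.onFun Disjoint I)) (s : Finset ℕ) :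
    ∑ k ∈ Finset.Ico p (p + q), ∑ j ∈ s, cv P U i k (I j) (I j)
      ≤ 1 + 8 * ∑ n ∈ Finset.Ico 1 q, alphaCoef P U n := by
  rw [Finset.mem_Ico] at hi
  rw [← Finset.sum_Ico_consecutive _ hi.1 hi.2.le, Finset.sum_eq_sum_Ico_succ_bot hi.2]
  have h1 : ∑ k ∈ Finset.Ico p i, ∑ j ∈ s, cv P U i k (I j) (I j)
      ≤ 4 * ∑ n ∈ Finset.Ico 1 q, alphaCoef P U n := by
    calc _ ≤ ∑ k ∈ Finset.Ico p i, 4 * alphaCoef P U (i - k) := by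
          refine Finset.sum_le_sum fun k hk => ?_
          rw [Finset.mem_Ico] at hk
          have := cv_trace P U hmeas k (i - k) I hI hd s
          rw [Nat.add_sub_cancel' hk.2.le] at this
          simpa only [cv_comm P U i k] using this
      _ = 4 * ∑ n ∈ (Finset.Ico p i).image (fun k => i - k), alphaCoef P U n := by
          rw [Finset.mul_sum, Finset.sum_image]
          intro a ha b hb hab
          simp at ha hb hab
          omega
      _ ≤ _ := by
          refine mul_le_mul_of_nonneg_left (Finset.sum_le_sum_of_subset_of_nonneg ?_
            fun n _ _ => alpha_nonneg P U n) (by norm_num)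
          intro n hn
          simp at hn ⊢
          omega
  have h2 : ∑ k ∈ Finset.Ico (i + 1) (p + q), ∑ j ∈ s, cv P U i k (I j) (I j)
      ≤ 4 * ∑ n ∈ Finset.Ico 1 q, alphaCoef P U n := by
    calc _ ≤ ∑ k ∈ Finset.Ico (i + 1) (p + q), 4 * alphaCoef P U (k - i) := by
          refine Finset.sum_le_sum fun k hk => ?_
          rw [Finset.mem_Ico] at hk
          have := cv_trace P U hmeas i (k - i) I hI hd s
          rwa [Nat.add_sub_cancel' (by omega)] at this
      _ = 4 * ∑ n ∈ (Finset.Ico (i + 1) (p + q)).image (fun k => k - i), alphaCoef P U n := by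
          rw [Finset.mul_sum, Finset.sum_image]
          intro a ha b hb hab
          simp at ha hb hab
          omega
      _ ≤ _ := by
          refine mul_le_mul_of_nonneg_left (Finset.sum_le_sum_of_subset_of_nonneg ?_
            fun n _ _ => alpha_nonneg P U n) (by norm_num)
          intro n hn
          simp at hn ⊢
          omega
  have h3 := cv_diag P U hmeas i I hI hd s
  linarith

/-- centred empirical process -/
noncomputable def Gp (p q : ℕ) (ω : Ω) (t : ℝ) : ℝ :=
  ∑ i ∈ Finset.Ico p (p + q), ((Set.Iic t).indicator (fun _ => (1 : ℝ)) (U i ω) - t)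

lemma Gp_meas (hmeas : ∀ i, Measurable (U i)) (p q : ℕ) (t : ℝ) :
    Measurable fun ω => Gp U p q ω t := by
  unfold Gp
  refine Finset.measurable_sum _ fun i _ => ?_
  exact ((measurable_const.indicator measurableSet_Iic).comp (hmeas i)).sub_const _

lemma unif_prob (hmeas : ∀ i, Measurable (U i))
    (hunif : ∀ i, Measure.map (U i) P = volume.restrict (Set.Icc (0 : ℝ) 1)) (i : ℕ)
    (a b : ℝ) (ha : 0 ≤ a) (hab : a ≤ b) (hb : b ≤ 1) :
    P.real (U i ⁻¹' Ioc a b) = b - a := by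
  rw [← map_measureReal_apply (hmeas i) measurableSet_Ioc, hunif, measureReal_def,
    Measure.restrict_apply measurableSet_Ioc, inter_eq_left.2, Real.volume_Ioc,
    ENNReal.toReal_ofReal (by linarith)]
  exact fun x hx => ⟨by linarith [hx.1], by linarith [hx.2]⟩

lemma Gp_incr (p q : ℕ) (ω : Ω) (a b : ℝ) (hab : a ≤ b) :
    Gp U p q ω b - Gp U p q ω a =
      ∑ i ∈ Finset.Ico p (p + q), ((U i ⁻¹' Ioc a b).indicator (fun _ => (1 : ℝ)) ω - (b - a)) := by
  unfold Gp
  rw [← Finset.sum_sub_distrib]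
  refine Finset.sum_congr rfl fun i _ => ?_
  simp only [indicator, mem_Iic, mem_preimage, mem_Ioc]
  split_ifs <;> grind

lemma incr_sq (hmeas : ∀ i, Measurable (U i))
    (hunif : ∀ i, Measure.map (U i) P = volume.restrict (Set.Icc (0 : ℝ) 1)) (p q : ℕ)
    (a b : ℝ) (ha : 0 ≤ a) (hab : a ≤ b) (hb : b ≤ 1) :
    Integrable (fun ω => (Gp U p q ω b - Gp U p q ω a) ^ 2) P ∧
    ∫ ω, (Gp U p q ω b - Gp U p q ω a) ^ 2 ∂P =
      ∑ i ∈ Finset.Ico p (p + q), ∑ k ∈ Finset.Ico p (p + q), cv P U i k (Ioc a b) (Ioc a b) := by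
  set E : ℕ → Set Ω := fun i => U i ⁻¹' Ioc a b with hE
  have hEm : ∀ i, MeasurableSet (E i) := fun i => hmeas i measurableSet_Ioc
  have heq : (fun ω => (Gp U p q ω b - Gp U p q ω a) ^ 2) = fun ω =>
      ∑ i ∈ Finset.Ico p (p + q), ∑ k ∈ Finset.Ico p (p + q),
        ((E i ∩ E k).indicator (fun _ => (1 : ℝ)) ω - (b - a) * (E i).indicator (fun _ => (1 : ℝ)) ω
          - (b - a) * (E k).indicator (fun _ => (1 : ℝ)) ω + (b - a) ^ 2) := by
    funext ω
    rw [Gp_incr U p q ω a b hab, sq, Finset.sum_mul_sum]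
    refine Finset.sum_congr rfl fun i _ => Finset.sum_congr rfl fun k _ => ?_
    change ((E i).indicator _ ω - _) * ((E k).indicator _ ω - _) = _
    have : (E i ∩ E k).indicator (fun _ => (1 : ℝ)) ω
        = (E i).indicator (fun _ => (1 : ℝ)) ω * (E k).indicator (fun _ => (1 : ℝ)) ω := by
      by_cases h1 : ω ∈ E i <;> by_cases h2 : ω ∈ E k <;> simp [h1, h2]
    rw [this]; ring
  have hi1 : ∀ S : Set Ω, MeasurableSet S → Integrable (S.indicator (fun _ => (1 : ℝ))) P :=
    fun S hS => (integrable_const 1).indicator hS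
  have hv1 : ∀ S : Set Ω, MeasurableSet S → ∫ ω, S.indicator (fun _ => (1 : ℝ)) ω ∂P = P.real S :=
    fun S hS => integral_indicator_one hS
  have hint : ∀ i k, Integrable (fun ω => (E i ∩ E k).indicator (fun _ => (1 : ℝ)) ω
      - (b - a) * (E i).indicator (fun _ => (1 : ℝ)) ω
          - (b - a) * (E k).indicator (fun _ => (1 : ℝ)) ω + (b - a) ^ 2) P := fun i k =>
    (((hi1 _ ((hEm i).inter (hEm k))).sub ((hi1 _ (hEm i)).const_mul _)).sub
      ((hi1 _ (hEm k)).const_mul _)).add (integrable_const _)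
  rw [heq]
  refine ⟨integrable_finsetSum _ fun i _ => integrable_finsetSum _ fun k _ => hint i k, ?_⟩
  rw [integral_finsetSum _ fun i _ => integrable_finsetSum _ fun k _ => hint i k]
  refine Finset.sum_congr rfl fun i _ => ?_
  rw [integral_finsetSum _ fun k _ => hint i k]
  refine Finset.sum_congr rfl fun k _ => ?_
  have A := hi1 _ ((hEm i).inter (hEm k))
  have B := (hi1 _ (hEm i)).const_mul (b - a)
  have C := (hi1 _ (hEm k)).const_mul (b - a)
  have AB : Integrable (fun ω => (E i ∩ E k).indicator (fun _ => (1 : ℝ)) ω -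
      (b - a) * (E i).indicator (fun _ => (1 : ℝ)) ω) P := A.sub B
  have ABC : Integrable (fun ω => (E i ∩ E k).indicator (fun _ => (1 : ℝ)) ω -
      (b - a) * (E i).indicator (fun _ => (1 : ℝ)) ω -
      (b - a) * (E k).indicator (fun _ => (1 : ℝ)) ω) P := AB.sub C
  rw [integral_add ABC (integrable_const _), integral_sub AB C,
    integral_sub A B, integral_const_mul, integral_const_mul, hv1 _ (hEm i), hv1 _ (hEm k),
    hv1 _ ((hEm i).inter (hEm k)), integral_const]
  have u1 : P.real (E i) = b - a := unif_prob P U hmeas hunif i a b ha hab hb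
  have u2 : P.real (E k) = b - a := unif_prob P U hmeas hunif k a b ha hab hb
  unfold cv
  change _ = P.real (E i ∩ E k) - P.real (E i) * P.real (E k)
  rw [u1, u2]
  simp
  ring

/-- sum of squared increments over the triadic grid of level `l` -/
noncomputable def Dl (g : ℝ → ℝ) (l : ℕ) : ℝ :=
  ∑ k ∈ Finset.range (3 ^ l), (g ((k + 1 : ℕ) / 3 ^ l) - g ((k : ℕ) / 3 ^ l)) ^ 2

lemma Dl_int (hmeas : ∀ i, Measurable (U i))
    (hunif : ∀ i, Measure.map (U i) P = volume.restrict (Set.Icc (0 : ℝ) 1)) (p q l : ℕ) :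
    Integrable (fun ω => Dl (Gp U p q ω) l) P ∧
    ∫ ω, Dl (Gp U p q ω) l ∂P ≤ q * (1 + 8 * ∑ n ∈ Finset.Ico 1 q, alphaCoef P U n) := by
  have h3 : (0 : ℝ) < 3 ^ l := by positivity
  have key : ∀ k ∈ Finset.range (3 ^ l), _ := fun k hk =>
    incr_sq P U hmeas hunif p q ((k : ℕ) / 3 ^ l) ((k + 1 : ℕ) / 3 ^ l) (by positivity)
      (by gcongr; omega) (by
        rw [div_le_one h3]
        have := Finset.mem_range.1 hk
        exact_mod_cast this)
  refine ⟨integrable_finsetSum _ fun k hk => (key k hk).1, ?_⟩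
  unfold Dl
  rw [integral_finsetSum _ fun k hk => (key k hk).1, Finset.sum_congr rfl fun k hk => (key k hk).2]
  set I : ℕ → Set ℝ := fun k => Ioc ((k : ℕ) / 3 ^ l) ((k + 1 : ℕ) / 3 ^ l) with hI
  have hd : Pairwise (Function.onFun Disjoint I) := by
    have hm : Monotone fun k : ℕ => (k : ℝ) / 3 ^ l := fun a b hab => by
      have : (a : ℝ) ≤ b := by exact_mod_cast hab
      change (a : ℝ) / 3 ^ l ≤ b / 3 ^ l
      gcongr
    exact hm.pairwise_disjoint_on_Ioc_succ
  rw [Finset.sum_comm]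
  calc _ ≤ ∑ i ∈ Finset.Ico p (p + q), (1 + 8 * ∑ n ∈ Finset.Ico 1 q, alphaCoef P U n) := by
        refine Finset.sum_le_sum fun i hi => ?_
        rw [Finset.sum_comm]
        exact cv_row P U hmeas p q i hi I (fun _ => measurableSet_Ioc) hd _
    _ = _ := by simp; ring

end prob

lemma Dl_nonneg (g : ℝ → ℝ) (l : ℕ) : 0 ≤ Dl g l := Finset.sum_nonneg fun _ _ => sq_nonneg _

lemma incr_le (g : ℝ → ℝ) (l k : ℕ) (hk : k < 3 ^ l) :
    |g ((k + 1 : ℕ) / 3 ^ l) - g ((k : ℕ) / 3 ^ l)| ≤ √(Dl g l) := by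
  refine Real.abs_le_sqrt ?_
  exact Finset.single_le_sum (f := fun k : ℕ => (g ((k + 1 : ℕ) / 3 ^ l) - g ((k : ℕ) / 3 ^ l)) ^ 2)
    (fun _ _ => sq_nonneg _) (Finset.mem_range.2 hk)

lemma chain (g : ℝ → ℝ) (h0 : g 0 = 0) (h1 : g 1 = 0) (l : ℕ) : ∀ k : ℕ, k ≤ 3 ^ l →
    |g ((k : ℝ) / 3 ^ l)| ≤ ∑ i ∈ Finset.range l, √(Dl g (i + 1)) := by
  induction l with
  | zero =>
    intro k hk
    have : k = 0 ∨ k = 1 := by simp at hk; omega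
    rcases this with rfl | rfl <;> simp [h0, h1]
  | succ l ih =>
    intro k hk
    rw [Finset.sum_range_succ]
    have hs : 0 ≤ √(Dl g (l + 1)) := Real.sqrt_nonneg _
    have hp : (3 : ℕ) ^ (l + 1) = 3 * 3 ^ l := by ring
    have e : ∀ j : ℕ, ((3 * j : ℕ) : ℝ) / 3 ^ (l + 1) = j / 3 ^ l := by
      intro j; push_cast; rw [pow_succ]; field_simp
    obtain ⟨j, hj | hj | hj⟩ : ∃ j, k = 3 * j ∨ k = 3 * j + 1 ∨ k + 1 = 3 * (j + 1) :=
      ⟨k / 3, by omega⟩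
    · rw [hj, e]
      have := ih j (by omega)
      linarith
    · have h2 := ih j (by omega)
      have h3 := incr_le g (l + 1) (3 * j) (by omega)
      rw [e j] at h3
      rw [hj]
      have := abs_sub_abs_le_abs_sub (g ((3 * j + 1 : ℕ) / 3 ^ (l + 1))) (g (j / 3 ^ l))
      linarith
    · have h2 := ih (j + 1) (by omega)
      have h3 := incr_le g (l + 1) k (by omega)
      rw [hj, e (j + 1), abs_sub_comm] at h3
      have := abs_sub_abs_le_abs_sub (g (k / 3 ^ (l + 1))) (g ((j + 1 : ℕ) / 3 ^ l))
      linarith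

lemma Gp_bound {Ω : Type*} [MeasurableSpace Ω] (U : ℕ → Ω → ℝ) (p q L : ℕ) (ω : Ω) (t : ℝ) (ht : t ∈ Ioo (0 : ℝ) 1)
    (h0 : Gp U p q ω 0 = 0) (h1 : Gp U p q ω 1 = 0) :
    |Gp U p q ω t| ≤ ∑ i ∈ Finset.range L, √(Dl (Gp U p q ω) (i + 1)) + q / 3 ^ L := by
  have h3 : (0 : ℝ) < 3 ^ L := by positivity
  set k := ⌊t * 3 ^ L⌋₊ with hk
  have hk1 : (k : ℝ) ≤ t * 3 ^ L := Nat.floor_le (by have := ht.1; positivity)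
  have hk2 : t * 3 ^ L < k + 1 := Nat.lt_floor_add_one _
  have hk3 : k < 3 ^ L := by
    have : (k : ℝ) < 3 ^ L := by nlinarith [ht.2]
    exact_mod_cast this
  have ha : (k : ℝ) / 3 ^ L ≤ t := by rwa [div_le_iff₀ h3]
  have hb : t ≤ ((k + 1 : ℕ) : ℝ) / 3 ^ L := by rw [le_div_iff₀ h3]; push_cast; exact hk2.le
  have hab : ((k + 1 : ℕ) : ℝ) / 3 ^ L - (k : ℝ) / 3 ^ L = 1 / 3 ^ L := by push_cast; ring
  have mono : ∀ s u : ℝ, s ≤ u → Gp U p q ω s - Gp U p q ω u ≤ q * (u - s) := by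
    intro s u hsu
    have h : Gp U p q ω u - Gp U p q ω s ≥ ∑ i ∈ Finset.Ico p (p + q), -(u - s) := by
      rw [Gp_incr U p q ω s u hsu]
      refine Finset.sum_le_sum fun i _ => ?_
      have : 0 ≤ (U i ⁻¹' Ioc s u).indicator (fun _ => (1 : ℝ)) ω :=
        indicator_nonneg (fun _ _ => zero_le_one) _
      linarith
    simp at h
    linarith
  have c1 := abs_le.1 (chain (Gp U p q ω) h0 h1 L k hk3.le)
  have c2 := abs_le.1 (chain (Gp U p q ω) h0 h1 L (k + 1) hk3)
  have m1 := mono _ _ ha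
  have m2 := mono _ _ hb
  have hq : (0 : ℝ) ≤ q := Nat.cast_nonneg q
  have e : (q : ℝ) / 3 ^ L = q * (((k + 1 : ℕ) : ℝ) / 3 ^ L - (k : ℝ) / 3 ^ L) := by rw [hab]; ring
  have n1 : (q : ℝ) * (t - k / 3 ^ L) ≤ q / 3 ^ L := by rw [e]; gcongr
  have n2 : (q : ℝ) * (((k + 1 : ℕ) : ℝ) / 3 ^ L - t) ≤ q / 3 ^ L := by rw [e]; gcongr
  rw [abs_le]
  constructor <;> linarith [c1.1, c1.2, c2.1, c2.2]

lemma weighted_cs (L : ℕ) (d : ℕ → ℝ) (hd : ∀ i, 0 ≤ d i) (c : ℝ) :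
    (∑ i ∈ Finset.range L, √(d i) + c) ^ 2 ≤
      (L + 1 / 2) * (∑ i ∈ Finset.range L, d i + 2 * c ^ 2) := by
  have h : (∑ i ∈ Finset.range L, √(d i)) ^ 2 ≤ L * ∑ i ∈ Finset.range L, d i := by
    have := sq_sum_le_card_mul_sum_sq (s := Finset.range L) (f := fun i => √(d i))
    simpa [Real.sq_sqrt (hd _)] using this
  set M := ∑ i ∈ Finset.range L, √(d i)
  set D := ∑ i ∈ Finset.range L, d i
  have hD : 0 ≤ D := Finset.sum_nonneg fun i _ => hd i
  rcases Nat.eq_zero_or_pos L with hL | hL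
  · have : M = 0 := by simp [M, hL]
    have : D = 0 := by simp [D, hL]
    simp [*]
  · have hL' : (0 : ℝ) < L := by exact_mod_cast hL
    -- 2 M c ≤ M²/(2L) + 2 L c²
    have h2 : 2 * M * c ≤ D / 2 + 2 * L * c ^ 2 := by
      have h5 : 0 ≤ (M - 2 * L * c) ^ 2 := sq_nonneg _
      have : 0 ≤ L * (D + 4 * L * c ^ 2 - 4 * M * c) := by nlinarith
      have := nonneg_of_mul_nonneg_right this hL'
      linarith
    nlinarith

lemma clog_bound (q : ℕ) (hq : 2 ≤ q) :
    2 * ((Nat.clog 9 q : ℝ) + 1 / 2) ^ 2 ≤ (2 + Real.log q) ^ 2 := by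
  have h1 : 9 ^ (Nat.clog 9 q - 1) < q := Nat.pow_pred_clog_lt_self (by norm_num) (by omega)
  have hL : 0 < Nat.clog 9 q := Nat.clog_pos (by norm_num) hq
  obtain ⟨m, hm⟩ : ∃ m, Nat.clog 9 q = m + 1 := ⟨Nat.clog 9 q - 1, by omega⟩
  rw [hm] at h1 ⊢
  simp at h1
  have h2 : (m : ℝ) * 2 ≤ Real.log q := by
    have h3 : Real.log ((9 : ℝ) ^ m) ≤ Real.log q :=
      Real.log_le_log (by positivity) (by exact_mod_cast h1.le)
    rw [Real.log_pow] at h3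
    have h9 : 2 ≤ Real.log 9 := by
      rw [Real.le_log_iff_exp_le (by norm_num)]
      have : Real.exp 2 = Real.exp 1 ^ 2 := by rw [← Real.exp_nat_mul]; norm_num
      rw [this]
      nlinarith [Real.exp_one_lt_d9, Real.exp_pos 1]
    have : (0 : ℝ) ≤ m := Nat.cast_nonneg m
    nlinarith
  have h4 : 0.69 ≤ Real.log q := by
    have : Real.log 2 ≤ Real.log q := Real.log_le_log (by norm_num) (by exact_mod_cast hq)
    linarith [Real.log_two_gt_d9]
  have : (0 : ℝ) ≤ m := Nat.cast_nonneg m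
  push_cast
  nlinarith

lemma ae_good {Ω : Type*} [MeasurableSpace Ω] (P : Measure Ω) [IsProbabilityMeasure P]
    (U : ℕ → Ω → ℝ) (hmeas : ∀ i, Measurable (U i))
    (hunif : ∀ i, Measure.map (U i) P = volume.restrict (Set.Icc (0 : ℝ) 1)) :
    ∀ᵐ ω ∂P, ∀ i, U i ω ∈ Ioc (0 : ℝ) 1 := by
  rw [ae_all_iff]
  intro i
  have h := unif_prob P U hmeas hunif i 0 1 le_rfl zero_le_one le_rfl
  have hm : MeasurableSet (U i ⁻¹' Ioc (0 : ℝ) 1) := hmeas i measurableSet_Ioc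
  have : P (U i ⁻¹' Ioc (0 : ℝ) 1) = 1 := by
    rw [measureReal_def] at h
    rw [← ENNReal.ofReal_toReal (measure_ne_top P _), h]; simp
  exact (mem_ae_iff_prob_eq_one hm).2 this

/-- **Rio's maximal inequality** (Lemma 2 of the paper): for identically `U[0,1]`-distributed
random variables with α-mixing coefficients `α(n)` (and `α(0) := 1/4`),
`P[q^{-1/2} sup_{t∈(0,1)} Z_{p,q}(t) ≥ x] ≤ x^{-2} (1 + 4 ∑_{i=0}^{q-1} α(i)) (2 + log q)²`. -/
theorem rio_maximal_inequality
    {Ω : Type*} [MeasurableSpace Ω] (P : Measure Ω) [IsProbabilityMeasure P]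
    (U : ℕ → Ω → ℝ) (hmeas : ∀ i, Measurable (U i))
    (hunif : ∀ i, Measure.map (U i) P = volume.restrict (Set.Icc (0 : ℝ) 1))
    (p q : ℕ) (hq : 1 ≤ q) (x : ℝ) (hx : 0 < x) :
    P {ω | x ≤ (q : ℝ) ^ (-(1 / 2) : ℝ) * ⨆ t : Set.Ioo (0 : ℝ) 1, Zfun U p q t ω} ≤
      ENNReal.ofReal (x⁻¹ ^ 2 *
        (1 + 4 * ∑ i ∈ Finset.range q, (if i = 0 then 1 / 4 else alphaCoef P U i)) *
        (2 + Real.log q) ^ 2) := by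
  set S := ∑ n ∈ Finset.Ico 1 q, alphaCoef P U n with hS
  have hS0 : 0 ≤ S := Finset.sum_nonneg fun n _ => alpha_nonneg P U n
  have hsum : ∑ i ∈ Finset.range q, (if i = 0 then 1 / 4 else alphaCoef P U i) = 1 / 4 + S := by
    rw [Finset.range_eq_Ico, Finset.sum_eq_sum_Ico_succ_bot (by omega)]
    simp only [if_true, zero_add]
    congr 1
    refine Finset.sum_congr rfl fun i hi => ?_
    rw [if_neg]
    have := (Finset.mem_Ico.1 hi).1
    omega
  rw [hsum]
  have hne : Nonempty (Set.Ioo (0 : ℝ) 1) := ⟨⟨1 / 2, by norm_num, by norm_num⟩⟩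
  have hqpos : (0 : ℝ) < q := by exact_mod_cast hq
  set L := Nat.clog 9 q with hL
  set c : ℝ := q / 3 ^ L with hc
  have hc2 : c ^ 2 ≤ q := by
    have h9 : (q : ℝ) ≤ 9 ^ L := by exact_mod_cast Nat.le_pow_clog (by norm_num) q
    have : c ^ 2 = q * (q / 9 ^ L) := by
      rw [hc, div_pow, ← pow_mul, mul_comm L 2, pow_mul]; norm_num; ring
    rw [this]
    have : (q : ℝ) / 9 ^ L ≤ 1 := by rw [div_le_one (by positivity)]; exact h9
    nlinarith
  set H : Ω → ℝ := fun ω =>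
    (L + 1 / 2) * (∑ i ∈ Finset.range L, Dl (Gp U p q ω) (i + 1) + 2 * c ^ 2) with hH
  have hH0 : ∀ ω, 0 ≤ H ω := fun ω => by
    have : 0 ≤ ∑ i ∈ Finset.range L, Dl (Gp U p q ω) (i + 1) :=
      Finset.sum_nonneg fun i _ => Dl_nonneg _ _
    positivity
  have hDi := fun l => (Dl_int P U hmeas hunif p q l).1
  have hsi : Integrable (fun ω => ∑ i ∈ Finset.range L, Dl (Gp U p q ω) (i + 1)) P :=
    integrable_finsetSum _ fun i _ => hDi (i + 1)
  have hHi : Integrable H P := (hsi.add (integrable_const _)).const_mul _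
  have hHE : ∫ ω, H ω ∂P ≤ q * (2 + 4 * S) * (2 * (L + 1 / 2) ^ 2) := by
    rw [hH, integral_const_mul, integral_add hsi (integrable_const _),
      integral_finsetSum _ fun i _ => hDi (i + 1), integral_const]
    have : ∑ i ∈ Finset.range L, ∫ ω, Dl (Gp U p q ω) (i + 1) ∂P
        ≤ ∑ i ∈ Finset.range L, q * (1 + 8 * S) :=
      Finset.sum_le_sum fun i _ => (Dl_int P U hmeas hunif p q (i + 1)).2
    simp at this ⊢
    have hLn : (0 : ℝ) ≤ L := Nat.cast_nonneg L
    have h2 : ∑ i ∈ Finset.range L, ∫ ω, Dl (Gp U p q ω) (i + 1) ∂P + 2 * c ^ 2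
        ≤ 2 * (q * (2 + 4 * S)) * (L + 1 / 2) := by
      have : 0 ≤ (L : ℝ) * q := by positivity
      have : 0 ≤ (q : ℝ) * S := by positivity
      nlinarith
    calc _ ≤ ((L : ℝ) + 2⁻¹) * (2 * (q * (2 + 4 * S)) * (L + 1 / 2)) := by gcongr
      _ = _ := by ring
  have hsub : {ω | x ≤ (q : ℝ) ^ (-(1 / 2) : ℝ) * ⨆ t : Set.Ioo (0 : ℝ) 1, Zfun U p q t ω}
      ≤ᵐ[P] {ω | x ^ 2 * q ≤ H ω} := by
    filter_upwards [ae_good P U hmeas hunif] with ω hω hxω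
    change x ≤ _ at hxω
    change x ^ 2 * q ≤ H ω
    have hZ : ∀ t : Set.Ioo (0 : ℝ) 1, Zfun U p q t ω = |Gp U p q ω t| := by
      intro t
      unfold Zfun Gp
      congr 1
      refine Finset.sum_congr rfl fun i _ => ?_
      simp [indicator, (hω i).1.le]
    have g0 : Gp U p q ω 0 = 0 := by
      refine Finset.sum_eq_zero fun i _ => ?_
      simp [indicator, not_le.2 (hω i).1]
    have g1 : Gp U p q ω 1 = 0 := by
      refine Finset.sum_eq_zero fun i _ => ?_
      simp [indicator, (hω i).2]
    have hsup : ⨆ t : Set.Ioo (0 : ℝ) 1, Zfun U p q t ω ≤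
        ∑ i ∈ Finset.range L, √(Dl (Gp U p q ω) (i + 1)) + c :=
      ciSup_le fun t => by
        rw [hZ]
        exact Gp_bound U p q L ω t t.2 g0 g1
    set W := ⨆ t : Set.Ioo (0 : ℝ) 1, Zfun U p q t ω
    have hcs := weighted_cs L (fun i => Dl (Gp U p q ω) (i + 1)) (fun i => Dl_nonneg _ _) c
    have hr : (q : ℝ) ^ (-(1 / 2) : ℝ) = (√q)⁻¹ := by
      rw [Real.rpow_neg hqpos.le, ← Real.sqrt_eq_rpow]
    rw [hr] at hxω
    have hsq : 0 < √(q : ℝ) := Real.sqrt_pos.2 hqpos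
    have hxW : x * √q ≤ W := by
      rw [inv_mul_eq_div, le_div_iff₀ hsq] at hxω
      exact hxω
    have hlast : (x * √q) ^ 2 ≤ (∑ i ∈ Finset.range L, √(Dl (Gp U p q ω) (i + 1)) + c) ^ 2 :=
      pow_le_pow_left₀ (by positivity) (hxW.trans hsup) 2
    rw [mul_pow, Real.sq_sqrt hqpos.le] at hlast
    exact hlast.trans hcs
  refine (measure_mono_ae hsub).trans ?_
  have hmk := mul_meas_ge_le_integral_of_nonneg (Eventually.of_forall hH0) hHi (x ^ 2 * q)
  rw [← ofReal_measureReal]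
  refine ENNReal.ofReal_le_ofReal ?_
  rcases Nat.lt_or_ge q 2 with h | h
  · -- q = 1
    have hq1 : q = 1 := by omega
    have hL0 : L = 0 := by rw [hL, hq1]; simp
    have hLE : ∫ ω, H ω ∂P ≤ 1 := by
      have : H = fun _ => 1 := by funext ω; simp [hH, hL0, hc, hq1]
      rw [this]; simp
    have h5 := hmk.trans hLE
    rw [hq1] at h5 ⊢
    simp at h5 ⊢
    have h6 : P.real {ω | x ^ 2 ≤ H ω} ≤ (x ^ 2)⁻¹ := by
      rw [← one_div, le_div_iff₀ (by positivity)]; linarith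
    have h7 : 0 < (x ^ 2)⁻¹ := by positivity
    nlinarith [mul_nonneg h7.le hS0]
  · have hcl := clog_bound q h
    have h5 : x ^ 2 * q * P.real {ω | x ^ 2 * q ≤ H ω} ≤ q * (2 + 4 * S) * (2 + Real.log q) ^ 2 :=
      (hmk.trans hHE).trans (by gcongr)
    have h6 : x⁻¹ ^ 2 * (1 + 4 * (1 / 4 + S)) * (2 + Real.log q) ^ 2 =
        (q * (2 + 4 * S) * (2 + Real.log q) ^ 2) / (x ^ 2 * q) := by
      field_simp; ring
    rw [h6, le_div_iff₀ (by positivity)]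
    linarith
end

section
/- Let (U_i)_{i∈ℕ} be an α-mixing sequence of identically U[0,1]-distributed random variables with mixing coefficients satisfying α(n) ≤ C·n^{−ϑ} for all n ∈ ℕ and some constants C > 0 and ϑ > 2r, where r ∈ [0, 1/2). Then there exist R > r and β > 0 such that, defining for each N ∈ ℕ the events F_N := { sup_{t∈(0,1)} Z_{0,2^N}(t) ≥ 2^{N(1−R)} } and H_N := ⋃_{j=1}^{N} ⋃_{b=0}^{2^{N−j}−1} { sup_{t∈(0,1)} Z_{2^N + b·2^j, 2^{j−1}}(t) ≥ 2^{N(1−R)}·2^{−β(N−j)} }, one has ℙ[limsup_{N→∞} F_N] = ℙ[limsup_{N→∞} H_N] = 0. In particular, ℙ-almost surely there exist constants K₁, K₂ > 0 such that sup_{t∈(0,1)} Z_{0,2^N}(t) ≤ K₁·2^{N(1−R)} for all N ∈ ℕ, and sup_{t∈(0,1)} Z_{2^N + b·2^j, 2^{j−1}}(t) ≤ K₂·2^{N(1−R)}·2^{−β(N−j)} for all N ∈ ℕ, j ∈ {1,…,N} and b ∈ {0,…,2^{N−j}−1}. -/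
open MeasureTheory Filter Set

lemma bc_signs {ι : Type*} [DecidableEq ι] (c : ι → ι → ℝ) (s : Finset ι) :
    ∃ S ⊆ s, ∑ m ∈ s, c m m ≤ (∑ m ∈ S, ∑ n ∈ S, c m n) - (∑ m ∈ S, ∑ n ∈ s \ S, c m n)
      - (∑ m ∈ s \ S, ∑ n ∈ S, c m n) + ∑ m ∈ s \ S, ∑ n ∈ s \ S, c m n := by
  have key : ∃ e : ι → ℝ, (∀ m, e m = 1 ∨ e m = -1) ∧
      ∑ m ∈ s, c m m ≤ ∑ m ∈ s, ∑ n ∈ s, e m * e n * c m n := by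
    induction s using Finset.induction_on with
    | empty => exact ⟨fun _ => 1, fun _ => Or.inl rfl, by simp⟩
    | insert a s ha ih =>
      obtain ⟨e, he, h⟩ := ih
      set X : ℝ := ∑ n ∈ s, e n * (c a n + c n a) with hX
      have main : ∀ δ : ℝ, (δ = 1 ∨ δ = -1) → 0 ≤ δ * X →
          ∑ m ∈ insert a s, c m m ≤ ∑ m ∈ insert a s, ∑ n ∈ insert a s,
            (Function.update e a δ) m * (Function.update e a δ) n * c m n := by
        intro δ hδ hp
        have hne : ∀ m ∈ s, Function.update e a δ m = e m := fun m hm =>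
          Function.update_of_ne (fun h => by subst h; exact ha hm) _ _
        have e1 : ∑ m ∈ insert a s, ∑ n ∈ insert a s,
            (Function.update e a δ) m * (Function.update e a δ) n * c m n
            = δ * δ * c a a + δ * X + ∑ m ∈ s, ∑ n ∈ s, e m * e n * c m n := by
          simp only [Finset.sum_insert ha, Function.update_self]
          rw [Finset.sum_add_distrib]
          have h1 : ∑ n ∈ s, δ * Function.update e a δ n * c a n = ∑ n ∈ s, δ * e n * c a n :=
            Finset.sum_congr rfl fun n hn => by rw [hne n hn]
          have h2 : ∑ n ∈ s, Function.update e a δ n * δ * c n a = ∑ n ∈ s, e n * δ * c n a :=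
            Finset.sum_congr rfl fun n hn => by rw [hne n hn]
          have h3 : ∑ m ∈ s, ∑ n ∈ s, Function.update e a δ m * Function.update e a δ n * c m n
              = ∑ m ∈ s, ∑ n ∈ s, e m * e n * c m n :=
            Finset.sum_congr rfl fun m hm => Finset.sum_congr rfl fun n hn => by
              rw [hne n hn, hne m hm]
          have h4 : δ * X = ∑ n ∈ s, δ * e n * c a n + ∑ n ∈ s, e n * δ * c n a := by
            rw [hX, Finset.mul_sum, ← Finset.sum_add_distrib]
            exact Finset.sum_congr rfl fun n _ => by ring
          rw [h1, h2, h3, h4]; ring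
        rw [e1, Finset.sum_insert ha]
        have : δ * δ = 1 := by rcases hδ with h | h <;> rw [h] <;> norm_num
        rw [this]; linarith
      have hup : ∀ δ : ℝ, (δ = 1 ∨ δ = -1) → ∀ m, Function.update e a δ m = 1 ∨
          Function.update e a δ m = -1 := by
        intro δ hδ m
        by_cases hm : m = a
        · subst hm; simpa using hδ
        · rw [Function.update_of_ne hm]; exact he m
      rcases le_total 0 X with h0 | h0
      · exact ⟨_, hup 1 (Or.inl rfl), main 1 (Or.inl rfl) (by linarith)⟩
      · exact ⟨_, hup (-1) (Or.inr rfl), main (-1) (Or.inr rfl) (by linarith)⟩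
  obtain ⟨e, he, h⟩ := key
  classical
  refine ⟨s.filter (fun m => e m = 1), Finset.filter_subset _ _, h.trans (le_of_eq ?_)⟩
  set S := s.filter (fun m => e m = 1) with hS
  have hSs : S ⊆ s := Finset.filter_subset _ _
  have h1 : ∀ m ∈ S, e m = 1 := fun m hm => (Finset.mem_filter.1 hm).2
  have h2 : ∀ m ∈ s \ S, e m = -1 := by
    intro m hm
    rw [Finset.mem_sdiff, hS, Finset.mem_filter] at hm
    rcases he m with h | h
    · exact absurd ⟨hm.1, h⟩ hm.2
    · exact h
  have split : ∀ f : ι → ℝ, ∑ m ∈ s, f m = ∑ m ∈ s \ S, f m + ∑ m ∈ S, f m :=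
    fun f => (Finset.sum_sdiff hSs).symm
  have inner : ∀ m, ∑ n ∈ s, e m * e n * c m n = e m * (∑ n ∈ S, c m n - ∑ n ∈ s \ S, c m n) := by
    intro m
    rw [split, mul_sub, Finset.mul_sum, Finset.mul_sum, sub_eq_neg_add, ← Finset.sum_neg_distrib]
    congr 1
    · exact Finset.sum_congr rfl fun n hn => by rw [h2 n hn]; ring
    · exact Finset.sum_congr rfl fun n hn => by rw [h1 n hn]; ring
  simp only [inner]
  rw [split]
  have a1 : ∑ m ∈ S, e m * (∑ n ∈ S, c m n - ∑ n ∈ s \ S, c m n)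
      = ∑ m ∈ S, ∑ n ∈ S, c m n - ∑ m ∈ S, ∑ n ∈ s \ S, c m n := by
    rw [← Finset.sum_sub_distrib]
    exact Finset.sum_congr rfl fun n hn => by rw [h1 n hn]; ring
  have a2 : ∑ m ∈ s \ S, e m * (∑ n ∈ S, c m n - ∑ n ∈ s \ S, c m n)
      = -(∑ m ∈ s \ S, ∑ n ∈ S, c m n - ∑ m ∈ s \ S, ∑ n ∈ s \ S, c m n) := by
    rw [← Finset.sum_sub_distrib, ← Finset.sum_neg_distrib]
    exact Finset.sum_congr rfl fun n hn => by rw [h2 n hn]; ring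
  rw [a1, a2]; ring

lemma bc_alpha {Ω : Type*} [MeasurableSpace Ω] (P : Measure Ω) [IsProbabilityMeasure P]
    (U : ℕ → Ω → ℝ) (i j : ℕ) (hij : i ≤ j) (A B : Set ℝ) (hA : MeasurableSet A)
    (hB : MeasurableSet B) :
    |P.real (U i ⁻¹' A ∩ U j ⁻¹' B) - P.real (U i ⁻¹' A) * P.real (U j ⁻¹' B)|
      ≤ alphaCoef P U (j - i) := by
  unfold alphaCoef
  apply le_csSup
  · refine ⟨1, ?_⟩
    rintro c ⟨k, A, B, -, -, rfl⟩
    change |P.real _ - P.real _ * P.real _| ≤ 1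
    have h1 : P.real (A ∩ B) ≤ 1 := measureReal_le_one
    have h2 : P.real A ≤ 1 := measureReal_le_one
    have h3 : P.real B ≤ 1 := measureReal_le_one
    have h1' : 0 ≤ P.real (A ∩ B) := measureReal_nonneg
    have h2' : 0 ≤ P.real A := measureReal_nonneg
    have h3' : 0 ≤ P.real B := measureReal_nonneg
    rw [abs_le]; constructor <;> nlinarith
  · refine ⟨i, U i ⁻¹' A, U j ⁻¹' B, ?_, ?_, rfl⟩
    · have : MeasurableSpace.comap (U i) Real.measurableSpace ≤
          ⨆ l ∈ {l : ℕ | l ≤ i}, MeasurableSpace.comap (U l) Real.measurableSpace :=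
        le_iSup₂_of_le i (by simp) le_rfl
      exact this _ ⟨A, hA, rfl⟩
    · have : MeasurableSpace.comap (U j) Real.measurableSpace ≤
          ⨆ l ∈ {l : ℕ | i + (j - i) ≤ l}, MeasurableSpace.comap (U l) Real.measurableSpace :=
        le_iSup₂_of_le j (by simp only [mem_ofPred_eq]; omega) le_rfl
      exact this _ ⟨B, hB, rfl⟩

/-- dyadic cells -/
def bcI (k m : ℕ) : Set ℝ := Set.Ioc ((m : ℝ) / 2 ^ k) (((m : ℝ) + 1) / 2 ^ k)

lemma bcI_meas (k m : ℕ) : MeasurableSet (bcI k m) := measurableSet_Ioc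

lemma bcI_disj (k : ℕ) {m n : ℕ} (h : m ≠ n) : Disjoint (bcI k m) (bcI k n) := by
  have h2 : (0 : ℝ) < 2 ^ k := by positivity
  rw [Set.disjoint_left]
  rintro x ⟨h3, h4⟩ ⟨h5, h6⟩
  rw [div_lt_iff₀ h2] at h3 h5
  rw [le_div_iff₀ h2] at h4 h6
  have a : (m : ℝ) < n + 1 := by linarith
  have b : (n : ℝ) < m + 1 := by linarith
  norm_cast at a b
  omega

lemma bc_cov_pair {Ω : Type*} [MeasurableSpace Ω] (P : Measure Ω) [IsProbabilityMeasure P]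
    (U : ℕ → Ω → ℝ) (hmeas : ∀ i, Measurable (U i)) (i j : ℕ) (hij : i ≤ j) (k : ℕ) 
    (s : Finset ℕ) :
    ∑ m ∈ s, (P.real (U i ⁻¹' (bcI k m) ∩ U j ⁻¹' (bcI k m)) -
      P.real (U i ⁻¹' (bcI k m)) * P.real (U j ⁻¹' (bcI k m))) ≤ 4 * alphaCoef P U (j - i) := by
  set c : ℕ → ℕ → ℝ := fun m n => P.real (U i ⁻¹' (bcI k m) ∩ U j ⁻¹' (bcI k n)) -
      P.real (U i ⁻¹' (bcI k m)) * P.real (U j ⁻¹' (bcI k n)) with hc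
  have hU : ∀ (l : ℕ) (S : Finset ℕ), P.real (U l ⁻¹' (⋃ m ∈ S, bcI k m)) =
      ∑ m ∈ S, P.real (U l ⁻¹' (bcI k m)) := by
    intro l S
    rw [Set.preimage_iUnion₂, measureReal_biUnion_finset]
    · intro m _ n _ hmn
      exact (bcI_disj k hmn).preimage _
    · exact fun m _ => hmeas l (bcI_meas k m)
  have hc2 : ∀ S T : Finset ℕ, |∑ m ∈ S, ∑ n ∈ T, c m n| ≤ alphaCoef P U (j - i) := by
    intro S T
    have hm : ∀ S : Finset ℕ, MeasurableSet (⋃ m ∈ S, bcI k m) := fun S =>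
      Finset.measurableSet_biUnion _ fun m _ => bcI_meas k m
    convert bc_alpha P U i j hij (⋃ m ∈ S, bcI k m) (⋃ m ∈ T, bcI k m) (hm S) (hm T) using 2
    simp only [hc, Finset.sum_sub_distrib]
    congr 1
    · have h1 : ∀ m, P.real (U i ⁻¹' (bcI k m) ∩ U j ⁻¹' (⋃ n ∈ T, bcI k n)) =
          ∑ n ∈ T, P.real (U i ⁻¹' (bcI k m) ∩ U j ⁻¹' (bcI k n)) := by
        intro m
        rw [Set.preimage_iUnion₂, Set.inter_iUnion₂, measureReal_biUnion_finset]
        · intro a _ b _ hab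
          exact (((bcI_disj k hab).preimage _).inter_left' _).inter_right' _
        · exact fun n _ => (hmeas i (bcI_meas k m)).inter (hmeas j (bcI_meas k n))
      simp only [← h1]
      rw [Set.preimage_iUnion₂ (f := U i), Set.iUnion₂_inter, measureReal_biUnion_finset]
      · intro a _ b _ hab
        exact (((bcI_disj k hab).preimage _).inter_left _).inter_right _
      · exact fun n _ => (hmeas i (bcI_meas k n)).inter (hmeas j (hm T))
    · rw [hU, hU, Finset.sum_mul_sum]
  obtain ⟨S, -, h⟩ := bc_signs c s
  refine h.trans ?_
  have h1 := abs_le.1 (hc2 S S)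
  have h2 := abs_le.1 (hc2 S (s \ S))
  have h3 := abs_le.1 (hc2 (s \ S) S)
  have h4 := abs_le.1 (hc2 (s \ S) (s \ S))
  linarith

lemma bc_sum_rpow (θ : ℝ) (h0 : 0 < θ) (h1 : θ < 1) (q : ℕ) :
    ∑ n ∈ Finset.range q, ((n : ℝ) + 1) ^ (-θ) ≤ (q : ℝ) ^ (1 - θ) / (1 - θ) := by
  have hp : 0 < 1 - θ := by linarith
  induction q with
  | zero => simp [Real.zero_rpow hp.ne']
  | succ q ih =>
    rw [Finset.sum_range_succ]
    have hq : (0 : ℝ) < (q : ℝ) + 1 := by positivity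
    have hb : (1 + (-1 / ((q : ℝ) + 1))) ^ (1 - θ) ≤ 1 + (1 - θ) * (-1 / ((q : ℝ) + 1)) := by
      apply rpow_one_add_le_one_add_mul_self _ hp.le (by linarith)
      rw [le_div_iff₀ hq]; linarith [show (0 : ℝ) ≤ q by positivity]
    have e1 : (q : ℝ) = (1 + (-1 / ((q : ℝ) + 1))) * ((q : ℝ) + 1) := by field_simp; ring
    have e2 : (q : ℝ) ^ (1 - θ) = (1 + (-1 / ((q : ℝ) + 1))) ^ (1 - θ) * ((q : ℝ) + 1) ^ (1 - θ) := by
      conv_lhs => rw [e1]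
      apply Real.mul_rpow _ hq.le
      have : 1 + (-1 / ((q : ℝ) + 1)) = q / (q + 1) := by field_simp; ring
      rw [this]; positivity
    have e3 : ((q : ℝ) + 1) ^ (-θ) = ((q : ℝ) + 1) ^ (1 - θ) / (q + 1) := by
      rw [← Real.rpow_sub_one hq.ne']; congr 1; ring
    have hX : 0 < ((q : ℝ) + 1) ^ (1 - θ) := by positivity
    have : (q : ℝ) ^ (1 - θ) + (1 - θ) * ((q : ℝ) + 1) ^ (-θ) ≤ ((q : ℝ) + 1) ^ (1 - θ) := by
      rw [e2, e3]
      calc _ ≤ (1 + (1 - θ) * (-1 / ((q : ℝ) + 1))) * ((q : ℝ) + 1) ^ (1 - θ) +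
            (1 - θ) * (((q : ℝ) + 1) ^ (1 - θ) / (q + 1)) := by gcongr
        _ = _ := by field_simp; ring
    push_cast
    rw [le_div_iff₀ hp] at ih ⊢
    linarith

lemma bc_cell_prob {Ω : Type*} [MeasurableSpace Ω] (P : Measure Ω)
    (U : ℕ → Ω → ℝ) (hmeas : ∀ i, Measurable (U i))
    (hunif : ∀ i, Measure.map (U i) P = volume.restrict (Set.Icc (0 : ℝ) 1))
    (i k m : ℕ) (hm : m < 2 ^ k) : P.real (U i ⁻¹' (bcI k m)) = 1 / 2 ^ k := by
  have h2 : (0 : ℝ) < 2 ^ k := by positivity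
  have hs : bcI k m ⊆ Set.Icc 0 1 := by
    rintro x ⟨h3, h4⟩
    have hm' : (m : ℝ) + 1 ≤ 2 ^ k := by exact_mod_cast hm
    have h5 : ((m : ℝ) + 1) / 2 ^ k ≤ 1 := by rw [div_le_one h2]; exact hm'
    have h6 : 0 ≤ (m : ℝ) / 2 ^ k := by positivity
    exact ⟨by linarith, by linarith⟩
  rw [measureReal_def, ← Measure.map_apply (hmeas i) (bcI_meas k m), hunif,
    Measure.restrict_apply (bcI_meas k m), Set.inter_eq_left.2 hs, bcI, Real.volume_Ioc,
    ENNReal.toReal_ofReal]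
  · ring
  · have : ((m : ℝ) + 1) / 2 ^ k - m / 2 ^ k = 1 / 2 ^ k := by ring
    rw [this]; positivity

lemma bc_int {Ω : Type*} [MeasurableSpace Ω] (P : Measure Ω) [IsProbabilityMeasure P]
    (A B : Set Ω) (hA : MeasurableSet A) (hB : MeasurableSet B) :
    ∫ ω, (A.indicator (fun _ => (1 : ℝ)) ω - P.real A) * (B.indicator (fun _ => (1 : ℝ)) ω - P.real B) ∂P
      = P.real (A ∩ B) - P.real A * P.real B := by
  have iA : Integrable (A.indicator (fun _ => (1 : ℝ))) P := (integrable_const 1).indicator hA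
  have iB : Integrable (B.indicator (fun _ => (1 : ℝ))) P := (integrable_const 1).indicator hB
  have iAB : Integrable ((A ∩ B).indicator (fun _ => (1 : ℝ))) P :=
    (integrable_const 1).indicator (hA.inter hB)
  have e : ∀ ω, (A.indicator (fun _ => (1 : ℝ)) ω - P.real A) * (B.indicator (fun _ => (1 : ℝ)) ω - P.real B)
      = (A ∩ B).indicator (fun _ => (1 : ℝ)) ω - P.real A * B.indicator (fun _ => (1 : ℝ)) ω
        - P.real B * A.indicator (fun _ => (1 : ℝ)) ω + P.real A * P.real B := by
    intro ω
    by_cases h1 : ω ∈ A <;> by_cases h2 : ω ∈ B <;> simp [h1, h2] <;> ring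
  simp only [e]
  have i1 : Integrable (fun ω => (A ∩ B).indicator (fun _ => (1 : ℝ)) ω
      - P.real A * B.indicator (fun _ => (1 : ℝ)) ω) P := iAB.sub (iB.const_mul _)
  have i2 : Integrable (fun ω => (A ∩ B).indicator (fun _ => (1 : ℝ)) ω
      - P.real A * B.indicator (fun _ => (1 : ℝ)) ω
      - P.real B * A.indicator (fun _ => (1 : ℝ)) ω) P := i1.sub (iA.const_mul _)
  rw [integral_add i2 (integrable_const _),
    integral_sub i1 (iA.const_mul _), integral_sub iAB (iB.const_mul _),
    integral_const_mul, integral_const_mul, integral_indicator_const _ hA,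
    integral_indicator_const _ hB, integral_indicator_const _ (hA.inter hB)]
  simp
  ring

/-- centred cell counts -/
noncomputable def bcD {Ω : Type*} (U : ℕ → Ω → ℝ) (p q k m : ℕ) (ω : Ω) : ℝ :=
  ∑ i ∈ Finset.Ico p (p + q), ((U i ⁻¹' (bcI k m)).indicator (fun _ => (1 : ℝ)) ω - 1 / 2 ^ k)

lemma bc_term_int {Ω : Type*} [MeasurableSpace Ω] (P : Measure Ω) [IsProbabilityMeasure P]
    (A B : Set Ω) (hA : MeasurableSet A) (hB : MeasurableSet B) (a : ℝ) :
    Integrable (fun ω => (A.indicator (fun _ => (1 : ℝ)) ω - a) *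
      (B.indicator (fun _ => (1 : ℝ)) ω - a)) P := by
  have m1 : ∀ A : Set Ω, MeasurableSet A →
      Measurable (fun ω => A.indicator (fun _ => (1 : ℝ)) ω - a) := fun A hA =>
    (measurable_const.indicator hA).sub_const a
  have b1 : ∀ A : Set Ω, ∀ ω, |A.indicator (fun _ => (1 : ℝ)) ω - a| ≤ 1 + |a| := by
    intro A ω
    refine (abs_sub _ _).trans ?_
    gcongr
    by_cases h : ω ∈ A <;> simp [h]
  refine Integrable.of_bound (C := (1 + |a|) * (1 + |a|)) ((m1 A hA).mul (m1 B hB)).aestronglyMeasurable ?_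
  filter_upwards with ω
  rw [Real.norm_eq_abs, abs_mul]
  exact mul_le_mul (b1 A ω) (b1 B ω) (abs_nonneg _) (by positivity)

lemma bcD_sq {Ω : Type*} (U : ℕ → Ω → ℝ) (p q k m : ℕ) (ω : Ω) :
    bcD U p q k m ω ^ 2 = ∑ i ∈ Finset.Ico p (p + q), ∑ j ∈ Finset.Ico p (p + q),
      ((U i ⁻¹' (bcI k m)).indicator (fun _ => (1 : ℝ)) ω - 1 / 2 ^ k) *
      ((U j ⁻¹' (bcI k m)).indicator (fun _ => (1 : ℝ)) ω - 1 / 2 ^ k) := by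
  rw [bcD, sq, Finset.sum_mul_sum]

lemma bcD_sq_int {Ω : Type*} [MeasurableSpace Ω] (P : Measure Ω) [IsProbabilityMeasure P]
    (U : ℕ → Ω → ℝ) (hmeas : ∀ i, Measurable (U i)) (p q k m : ℕ) :
    Integrable (fun ω => bcD U p q k m ω ^ 2) P := by
  simp only [bcD_sq]
  exact integrable_finsetSum _ fun i _ => integrable_finsetSum _ fun j _ =>
    bc_term_int P _ _ (hmeas i (bcI_meas k m)) (hmeas j (bcI_meas k m)) _

lemma bc_dist_sum (f : ℕ → ℝ) (hf : ∀ n, 0 ≤ f n) (p q i : ℕ) (hi : i ∈ Finset.Ico p (p + q)) :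
    ∑ j ∈ Finset.Ico p (p + q), f (Nat.dist i j) ≤ 2 * ∑ n ∈ Finset.range q, f n := by
  rw [Finset.mem_Ico] at hi
  rw [← Finset.sum_filter_add_sum_filter_not _ (fun j => j ≤ i), two_mul]
  have main : ∀ s : Finset ℕ, s ⊆ Finset.Ico p (p + q) →
      (∀ a ∈ s, ∀ b ∈ s, Nat.dist i a = Nat.dist i b → a = b) →
      ∑ j ∈ s, f (Nat.dist i j) ≤ ∑ n ∈ Finset.range q, f n := by
    intro s hs hinj
    rw [← Finset.sum_image (f := f) (g := fun j => Nat.dist i j) (s := s)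
      (fun a ha b hb h => hinj a ha b hb h)]
    apply Finset.sum_le_sum_of_subset_of_nonneg
    · intro n hn
      obtain ⟨j, hj, rfl⟩ := Finset.mem_image.1 hn
      have := Finset.mem_Ico.1 (hs hj)
      simp only [Finset.mem_range, Nat.dist]
      omega
    · exact fun n _ _ => hf n
  apply add_le_add
  · apply main _ (Finset.filter_subset _ _)
    intro a ha b hb h
    have ha := (Finset.mem_filter.1 ha).2
    have hb := (Finset.mem_filter.1 hb).2
    simp only [Nat.dist] at h
    omega
  · apply main _ (Finset.filter_subset _ _)
    intro a ha b hb h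
    have ha := (Finset.mem_filter.1 ha).2
    have hb := (Finset.mem_filter.1 hb).2
    simp only [Nat.dist] at h
    omega

lemma bc_cov_bound {Ω : Type*} [MeasurableSpace Ω] (P : Measure Ω) [IsProbabilityMeasure P]
    (U : ℕ → Ω → ℝ) (hmeas : ∀ i, Measurable (U i)) 
    (C θ : ℝ) (hC : 0 < C) (h0 : 0 < θ) (h1 : θ < 1)
    (hα : ∀ n : ℕ, 1 ≤ n → alphaCoef P U n ≤ C * (n : ℝ) ^ (-θ)) (i j k : ℕ) :
    ∑ m ∈ Finset.range (2 ^ k), (P.real (U i ⁻¹' (bcI k m) ∩ U j ⁻¹' (bcI k m)) -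
      P.real (U i ⁻¹' (bcI k m)) * P.real (U j ⁻¹' (bcI k m)))
      ≤ (1 + 8 * C) * ((Nat.dist i j : ℝ) + 1) ^ (-θ) := by
  have aux : ∀ n : ℕ, 1 ≤ n → 4 * alphaCoef P U n ≤ (1 + 8 * C) * ((n : ℝ) + 1) ^ (-θ) := by
    intro n hn
    have hn' : (1 : ℝ) ≤ n := by exact_mod_cast hn
    have e1 : (n : ℝ) ^ (-θ) ≤ 2 * ((n : ℝ) + 1) ^ (-θ) := by
      have : ((2 : ℝ) * n) ^ (-θ) ≤ ((n : ℝ) + 1) ^ (-θ) :=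
        Real.rpow_le_rpow_of_nonpos (by positivity) (by linarith) (by linarith)
      rw [Real.mul_rpow (by norm_num) (by positivity)] at this
      have h3 : (2 : ℝ) ^ (-1 : ℝ) ≤ 2 ^ (-θ) :=
        Real.rpow_le_rpow_of_exponent_le (by norm_num) (by linarith)
      rw [Real.rpow_neg_one] at h3
      have h4 : 0 ≤ (n : ℝ) ^ (-θ) := by positivity
      nlinarith
    have e2 := hα n hn
    have h4 : 0 ≤ ((n : ℝ) + 1) ^ (-θ) := by positivity
    nlinarith
  rcases lt_trichotomy i j with h | h | h
  · have := (bc_cov_pair P U hmeas i j h.le k (Finset.range (2 ^ k))).trans (aux (j - i) (by omega))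
    rwa [Nat.dist_eq_sub_of_le h.le]
  · subst h
    have h3 : ∑ m ∈ Finset.range (2 ^ k), P.real (U i ⁻¹' (bcI k m)) ≤ 1 := by
      rw [← measureReal_biUnion_finset]
      · exact measureReal_le_one
      · exact fun a _ b _ hab => (bcI_disj k hab).preimage _
      · exact fun m _ => hmeas i (bcI_meas k m)
    simp only [Set.inter_self, Nat.dist_self, Nat.cast_zero, zero_add, Real.one_rpow, mul_one]
    have h4 : ∑ m ∈ Finset.range (2 ^ k), (P.real (U i ⁻¹' (bcI k m)) -
      P.real (U i ⁻¹' (bcI k m)) * P.real (U i ⁻¹' (bcI k m))) ≤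
      ∑ m ∈ Finset.range (2 ^ k), P.real (U i ⁻¹' (bcI k m)) :=
      Finset.sum_le_sum fun m _ => by nlinarith [mul_self_nonneg (P.real (U i ⁻¹' (bcI k m)))]
    linarith
  · have := (bc_cov_pair P U hmeas j i h.le k (Finset.range (2 ^ k))).trans (aux (i - j) (by omega))
    rw [Nat.dist_comm, Nat.dist_eq_sub_of_le h.le]
    refine le_trans (le_of_eq ?_) this
    refine Finset.sum_congr rfl fun m _ => ?_
    rw [Set.inter_comm, mul_comm]

lemma bc_second_moment {Ω : Type*} [MeasurableSpace Ω] (P : Measure Ω) [IsProbabilityMeasure P]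
    (U : ℕ → Ω → ℝ) (hmeas : ∀ i, Measurable (U i))
    (hunif : ∀ i, Measure.map (U i) P = volume.restrict (Set.Icc (0 : ℝ) 1))
    (C θ : ℝ) (hC : 0 < C) (h0 : 0 < θ) (h1 : θ < 1)
    (hα : ∀ n : ℕ, 1 ≤ n → alphaCoef P U n ≤ C * (n : ℝ) ^ (-θ)) (p q k : ℕ) (hq : 1 ≤ q) :
    ∫ ω, ∑ m ∈ Finset.range (2 ^ k), bcD U p q k m ω ^ 2 ∂P ≤
      (2 * (1 + 8 * C) / (1 - θ)) * (q : ℝ) ^ (2 - θ) := by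
  have hp : 0 < 1 - θ := by linarith
  rw [integral_finsetSum _ fun m _ => bcD_sq_int P U hmeas p q k m]
  have e1 : ∀ m ∈ Finset.range (2 ^ k), ∫ ω, bcD U p q k m ω ^ 2 ∂P =
      ∑ i ∈ Finset.Ico p (p + q), ∑ j ∈ Finset.Ico p (p + q),
        (P.real (U i ⁻¹' (bcI k m) ∩ U j ⁻¹' (bcI k m)) -
      P.real (U i ⁻¹' (bcI k m)) * P.real (U j ⁻¹' (bcI k m))) := by
    intro m hm
    rw [Finset.mem_range] at hm
    have hi : ∀ i, MeasurableSet (U i ⁻¹' (bcI k m)) := fun i => hmeas i (bcI_meas k m)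
    simp only [bcD_sq]
    rw [integral_finsetSum _ fun i _ => integrable_finsetSum _ fun j _ =>
      bc_term_int P _ _ (hi i) (hi j) _]
    refine Finset.sum_congr rfl fun i _ => ?_
    rw [integral_finsetSum _ fun j _ => bc_term_int P _ _ (hi i) (hi j) _]
    refine Finset.sum_congr rfl fun j _ => ?_
    rw [← bc_int P _ _ (hi i) (hi j), bc_cell_prob P U hmeas hunif i k m hm,
      bc_cell_prob P U hmeas hunif j k m hm]
  rw [Finset.sum_congr rfl e1, Finset.sum_comm]
  calc _ ≤ ∑ i ∈ Finset.Ico p (p + q), 2 * ((1 + 8 * C) * ((q : ℝ) ^ (1 - θ) / (1 - θ))) := by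
        refine Finset.sum_le_sum fun i hi => ?_
        rw [Finset.sum_comm]
        calc _ ≤ ∑ j ∈ Finset.Ico p (p + q), (1 + 8 * C) * ((Nat.dist i j : ℝ) + 1) ^ (-θ) :=
              Finset.sum_le_sum fun j _ => bc_cov_bound P U hmeas C θ hC h0 h1 hα i j k
          _ ≤ 2 * ∑ n ∈ Finset.range q, (1 + 8 * C) * ((n : ℝ) + 1) ^ (-θ) :=
              bc_dist_sum (fun n => (1 + 8 * C) * ((n : ℝ) + 1) ^ (-θ))
                (fun n => by positivity) p q i hi
          _ ≤ _ := by
              rw [← Finset.mul_sum]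
              have := bc_sum_rpow θ h0 h1 q
              gcongr
    _ = _ := by
        have hq' : (0 : ℝ) < q := by exact_mod_cast hq
        have : (q : ℝ) ^ (2 - θ) = q * (q : ℝ) ^ (1 - θ) := by
          rw [mul_comm, ← Real.rpow_add_one hq'.ne']; congr 1; ring
        rw [this]
        simp
        ring

/-- empirical process with half-open intervals -/
noncomputable def bcG {Ω : Type*} (U : ℕ → Ω → ℝ) (p q : ℕ) (t : ℝ) (ω : Ω) : ℝ :=
  ∑ i ∈ Finset.Ico p (p + q), ((Set.Ioc 0 t).indicator (fun _ => (1 : ℝ)) (U i ω) - t)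

/-- chaining majorant -/
noncomputable def bcM {Ω : Type*} (U : ℕ → Ω → ℝ) (p q k : ℕ) (ω : Ω) : ℝ :=
  ∑ m ∈ Finset.range (2 ^ k), bcD U p q k m ω ^ 2

lemma bcM_nonneg {Ω : Type*} (U : ℕ → Ω → ℝ) (p q k : ℕ) (ω : Ω) : 0 ≤ bcM U p q k ω :=
  Finset.sum_nonneg fun _ _ => sq_nonneg _

lemma bcD_le {Ω : Type*} (U : ℕ → Ω → ℝ) (p q k m : ℕ) (hm : m < 2 ^ k) (ω : Ω) :
    |bcD U p q k m ω| ≤ √(bcM U p q k ω) := by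
  apply Real.abs_le_sqrt
  exact Finset.single_le_sum (f := fun m => bcD U p q k m ω ^ 2) (fun _ _ => sq_nonneg _)
    (Finset.mem_range.2 hm)

lemma bcG_step {Ω : Type*} (U : ℕ → Ω → ℝ) (p q k m : ℕ) (ω : Ω) :
    bcG U p q (((m + 1 : ℕ) : ℝ) / 2 ^ k) ω = bcG U p q ((m : ℝ) / 2 ^ k) ω + bcD U p q k m ω := by
  unfold bcG bcD
  rw [← Finset.sum_add_distrib]
  refine Finset.sum_congr rfl fun i _ => ?_
  have h1 : (0 : ℝ) ≤ (m : ℝ) / 2 ^ k := by positivity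
  have h2 : (m : ℝ) / 2 ^ k ≤ ((m : ℝ) + 1) / 2 ^ k := by gcongr; linarith
  have e : (Set.Ioc 0 (((m : ℝ) + 1) / 2 ^ k)).indicator (fun _ => (1 : ℝ)) (U i ω) =
      (Set.Ioc 0 ((m : ℝ) / 2 ^ k)).indicator (fun _ => (1 : ℝ)) (U i ω) +
      (U i ⁻¹' (bcI k m)).indicator (fun _ => (1 : ℝ)) ω := by
    have : (U i ⁻¹' (bcI k m)).indicator (fun _ => (1 : ℝ)) ω =
      (bcI k m).indicator (fun _ => (1 : ℝ)) (U i ω) := rfl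
    rw [this, ← Set.Ioc_union_Ioc_eq_Ioc h1 h2, Set.indicator_union_of_disjoint]
    · rfl
    · exact Set.Ioc_disjoint_Ioc_of_le le_rfl
  push_cast
  rw [e]; ring

lemma bcG_chain {Ω : Type*} (U : ℕ → Ω → ℝ) (p q : ℕ) (ω : Ω) (L : ℕ) :
    ∀ l : ℕ, l ≤ 2 ^ L → |bcG U p q ((l : ℝ) / 2 ^ L) ω| ≤ ∑ k ∈ Finset.range (L + 1), √(bcM U p q k ω) := by
  have hz : bcG U p q 0 ω = 0 := by simp [bcG]
  induction L with
  | zero =>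
    intro l hl
    have : l = 0 ∨ l = 1 := by simp at hl; omega
    rcases this with h | h
    · subst h; simp [hz]
    · subst h
      have := bcG_step U p q 0 0 ω
      have h2 := bcD_le U p q 0 0 (by norm_num) ω
      simp [hz] at this
      simpa [this] using h2
  | succ L ih =>
    intro l hl
    rw [Finset.sum_range_succ]
    have e2 : ∀ l' : ℕ, ((2 * l' : ℕ) : ℝ) / 2 ^ (L + 1) = l' / 2 ^ L := by
      intro l'; push_cast; rw [pow_succ]; field_simp
    rcases Nat.even_or_odd' l with ⟨l', h | h⟩
    · subst h
      rw [e2]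
      have := ih l' (by rw [pow_succ] at hl; omega)
      linarith [Real.sqrt_nonneg (bcM U p q (L + 1) ω)]
    · subst h
      have h5 : 2 * l' < 2 ^ (L + 1) := by omega
      rw [bcG_step, e2]
      have := ih l' (by rw [pow_succ] at hl; omega)
      have h4 := bcD_le U p q (L + 1) (2 * l') h5 ω
      exact (abs_add_le _ _).trans (by linarith)

/-- total chaining majorant -/
noncomputable def bcV {Ω : Type*} (U : ℕ → Ω → ℝ) (p q L : ℕ) (ω : Ω) : ℝ :=
  ((L : ℝ) + 1) * ∑ k ∈ Finset.range (L + 1), bcM U p q k ω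

lemma bcV_nonneg {Ω : Type*} (U : ℕ → Ω → ℝ) (p q L : ℕ) (ω : Ω) : 0 ≤ bcV U p q L ω :=
  mul_nonneg (by positivity) (Finset.sum_nonneg fun _ _ => bcM_nonneg _ _ _ _ _)

lemma bcG_grid {Ω : Type*} (U : ℕ → Ω → ℝ) (p q : ℕ) (ω : Ω) (L l : ℕ) (hl : l ≤ 2 ^ L) :
    |bcG U p q ((l : ℝ) / 2 ^ L) ω| ≤ √(bcV U p q L ω) := by
  refine (bcG_chain U p q ω L l hl).trans ?_
  apply Real.le_sqrt_of_sq_le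
  have := sq_sum_le_card_mul_sum_sq (s := Finset.range (L + 1)) (f := fun k => √(bcM U p q k ω))
  simp only [Real.sq_sqrt (bcM_nonneg _ _ _ _ _), Finset.card_range] at this
  rw [bcV]
  exact_mod_cast this

lemma bcG_mono {Ω : Type*} (U : ℕ → Ω → ℝ) (p q : ℕ) (ω : Ω) {s t : ℝ} (h : s ≤ t) :
    bcG U p q s ω + q * s ≤ bcG U p q t ω + q * t := by
  have e : ∀ s, bcG U p q s ω + q * s = 
      ∑ i ∈ Finset.Ico p (p + q), (Set.Ioc 0 s).indicator (fun _ => (1 : ℝ)) (U i ω) := by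
    intro s; simp [bcG, Finset.sum_sub_distrib]
  rw [e, e]
  refine Finset.sum_le_sum fun i _ => ?_
  exact Set.indicator_le_indicator_of_subset (Set.Ioc_subset_Ioc_right h) (fun _ => zero_le_one) _

lemma bcG_all {Ω : Type*} (U : ℕ → Ω → ℝ) (p q : ℕ) (ω : Ω) (L : ℕ) (t : ℝ)
    (ht : t ∈ Set.Ioo (0 : ℝ) 1) : |bcG U p q t ω| ≤ √(bcV U p q L ω) + q / 2 ^ L := by
  have h2 : (0 : ℝ) < 2 ^ L := by positivity
  have hpos : 0 ≤ t * 2 ^ L := mul_nonneg ht.1.le h2.le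
  set l := ⌊t * 2 ^ L⌋₊ with hl
  have f1 : (l : ℝ) ≤ t * 2 ^ L := Nat.floor_le hpos
  have f2 : t * 2 ^ L < l + 1 := Nat.lt_floor_add_one _
  have f3 : l < 2 ^ L := by
    have : (l : ℝ) < 2 ^ L := lt_of_le_of_lt f1 (by nlinarith [ht.2])
    exact_mod_cast this
  have g1 := abs_le.1 (bcG_grid U p q ω L l f3.le)
  have g2 := abs_le.1 (bcG_grid U p q ω L (l + 1) f3)
  have m1 := bcG_mono U p q ω (s := (l : ℝ) / 2 ^ L) (t := t) (by rwa [div_le_iff₀ h2])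
  have m2 := bcG_mono U p q ω (s := t) (t := ((l + 1 : ℕ) : ℝ) / 2 ^ L)
    (by rw [le_div_iff₀ h2]; push_cast; exact f2.le)
  have hq : (0 : ℝ) ≤ q := by positivity
  have d1 : t - (l : ℝ) / 2 ^ L ≤ 1 / 2 ^ L := by
    rw [sub_le_iff_le_add, ← add_div, le_div_iff₀ h2]; linarith
  have d2 : ((l + 1 : ℕ) : ℝ) / 2 ^ L - t ≤ 1 / 2 ^ L := by
    rw [sub_le_iff_le_add, ← sub_le_iff_le_add', ← sub_div, div_le_iff₀ h2]; push_cast; linarith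
  have d1' := mul_le_mul_of_nonneg_left d1 hq
  have d2' := mul_le_mul_of_nonneg_left d2 hq
  rw [mul_one_div] at d1' d2'
  rw [abs_le]
  constructor <;> linarith

lemma bc_sup_le {Ω : Type*} (U : ℕ → Ω → ℝ) (p q : ℕ) (ω : Ω) (hω : ∀ i, U i ω ≠ 0) (L : ℕ) :
    (⨆ t : Set.Ioo (0 : ℝ) 1, Zfun U p q t ω) ≤ √(bcV U p q L ω) + q / 2 ^ L := by
  have : Nonempty (Set.Ioo (0 : ℝ) 1) := ⟨⟨1 / 2, by norm_num, by norm_num⟩⟩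
  refine ciSup_le fun t => ?_
  have : Zfun U p q t ω = |bcG U p q t ω| := by
    unfold Zfun bcG
    congr 1
    refine Finset.sum_congr rfl fun i _ => ?_
    congr 1
    simp only [Set.indicator, Set.mem_Icc, Set.mem_Ioc]
    congr 1
    rw [le_iff_lt_or_eq (a := (0 : ℝ))]
    simp [(hω i).symm]
  rw [this]
  exact bcG_all U p q ω L t t.2

lemma bc_sup_le_q {Ω : Type*} (U : ℕ → Ω → ℝ) (p q : ℕ) (ω : Ω) :
    (⨆ t : Set.Ioo (0 : ℝ) 1, Zfun U p q t ω) ≤ q := by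
  have : Nonempty (Set.Ioo (0 : ℝ) 1) := ⟨⟨1 / 2, by norm_num, by norm_num⟩⟩
  refine ciSup_le fun t => ?_
  unfold Zfun
  refine (Finset.abs_sum_le_sum_abs _ _).trans ?_
  refine (Finset.sum_le_card_nsmul _ _ 1 fun i _ => ?_).trans (by simp)
  have h := t.2
  rw [Set.mem_Ioo] at h
  rw [abs_le]
  by_cases h' : U i ω ∈ Set.Icc (0 : ℝ) t
  · rw [Set.indicator_of_mem h']; constructor <;> linarith
  · rw [Set.indicator_of_notMem h']; constructor <;> linarith

lemma bc_tail {Ω : Type*} [MeasurableSpace Ω] (P : Measure Ω) [IsProbabilityMeasure P]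
    (U : ℕ → Ω → ℝ) (hmeas : ∀ i, Measurable (U i))
    (hunif : ∀ i, Measure.map (U i) P = volume.restrict (Set.Icc (0 : ℝ) 1))
    (C θ : ℝ) (hC : 0 < C) (h0 : 0 < θ) (h1 : θ < 1)
    (hα : ∀ n : ℕ, 1 ≤ n → alphaCoef P U n ≤ C * (n : ℝ) ^ (-θ)) :
    ∃ K > (0 : ℝ), ∀ (p q N : ℕ) (x : ℝ), 1 ≤ q → q ≤ 2 ^ N → 1 ≤ x →
      P {ω | x ≤ ⨆ t : Set.Ioo (0 : ℝ) 1, Zfun U p q t ω} ≤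
        ENNReal.ofReal (K * ((N : ℝ) + 2) ^ 2 * (q : ℝ) ^ (2 - θ) / x ^ 2) := by
  have hp : 0 < 1 - θ := by linarith
  set K0 := 2 * (1 + 8 * C) / (1 - θ) with hK0
  have hK0p : 0 < K0 := by positivity
  refine ⟨4 * K0, by positivity, fun p q N x hq hqN hx => ?_⟩
  have hMint : ∀ k, Integrable (fun ω => bcM U p q k ω) P := fun k =>
    integrable_finsetSum _ fun m _ => bcD_sq_int P U hmeas p q k m
  have hV : Integrable (bcV U p q (N + 1)) P :=
    (integrable_finsetSum _ fun k _ => hMint k).const_mul _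
  have hEV : ∫ ω, bcV U p q (N + 1) ω ∂P ≤ ((N : ℝ) + 2) ^ 2 * (K0 * (q : ℝ) ^ (2 - θ)) := by
    unfold bcV
    rw [integral_const_mul, integral_finsetSum _ fun k _ => hMint k]
    have : ∑ k ∈ Finset.range (N + 1 + 1), ∫ ω, bcM U p q k ω ∂P ≤
        ∑ k ∈ Finset.range (N + 1 + 1), K0 * (q : ℝ) ^ (2 - θ) :=
      Finset.sum_le_sum fun k _ => bc_second_moment P U hmeas hunif C θ hC h0 h1 hα p q k hq
    rw [Finset.sum_const, Finset.card_range, nsmul_eq_mul] at this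
    push_cast at this ⊢
    calc _ ≤ ((N : ℝ) + 1 + 1) * (((N : ℝ) + 1 + 1) * (K0 * (q : ℝ) ^ (2 - θ))) := by gcongr
      _ = _ := by ring
  have hae : ∀ᵐ ω ∂P, ∀ i, U i ω ≠ 0 := by
    rw [ae_all_iff]
    intro i
    have h3 : ∀ᵐ y ∂(Measure.map (U i) P), y ≠ 0 := by
      rw [hunif]
      apply ae_restrict_of_ae
      exact (by rw [ae_iff]; simp)
    exact ae_of_ae_map (hmeas i).aemeasurable h3
  have hsub : P {ω | x ≤ ⨆ t : Set.Ioo (0 : ℝ) 1, Zfun U p q t ω} ≤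
      P {ω | x ^ 2 / 4 ≤ bcV U p q (N + 1) ω} := by
    apply measure_mono_ae
    filter_upwards [hae] with ω hω hx'
    change x ≤ _ at hx'
    change x ^ 2 / 4 ≤ _
    have h5 := hx'.trans (bc_sup_le U p q ω hω (N + 1))
    have h6 : (q : ℝ) / 2 ^ (N + 1) ≤ 1 / 2 := by
      rw [div_le_iff₀ (by positivity), pow_succ]
      have : (q : ℝ) ≤ 2 ^ N := by exact_mod_cast hqN
      linarith
    have h7 : x / 2 ≤ √(bcV U p q (N + 1) ω) := by linarith
    have h8 := (Real.le_sqrt' (by linarith)).1 h7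
    linarith [h8, show (x / 2) ^ 2 = x ^ 2 / 4 by ring]
  refine hsub.trans ?_
  have mk := mul_meas_ge_le_integral_of_nonneg (μ := P)
    (Eventually.of_forall (bcV_nonneg U p q (N + 1))) hV (x ^ 2 / 4)
  rw [← ofReal_measureReal]
  apply ENNReal.ofReal_le_ofReal
  have hx2 : 0 < x ^ 2 := by positivity
  rw [le_div_iff₀ hx2]
  linarith

lemma bc_summable (K δ : ℝ) (hδ : 0 < δ) :
    ∑' N : ℕ, ENNReal.ofReal (K * ((N : ℝ) + 2) ^ 3 * (2 : ℝ) ^ (-(δ * N))) ≠ ⊤ := by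
  apply Summable.tsum_ofReal_ne_top
  set ρ : ℝ := (2 : ℝ) ^ (-δ) with hρ
  have hρ0 : 0 < ρ := by positivity
  have hρ1 : ρ < 1 := Real.rpow_lt_one_of_one_lt_of_neg (by norm_num) (by linarith)
  have h1 : Summable (fun n : ℕ => (n : ℝ) ^ 3 * ρ ^ n) :=
    summable_pow_mul_geometric_of_norm_lt_one 3 (by rwa [Real.norm_eq_abs, abs_of_pos hρ0])
  have h2 := ((summable_nat_add_iff 2).2 h1).mul_left (K * (ρ ^ 2)⁻¹)
  refine h2.congr fun N => ?_
  have : (2 : ℝ) ^ (-(δ * N)) = ρ ^ N := by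
    rw [hρ, ← Real.rpow_natCast, ← Real.rpow_mul (by norm_num)]; congr 1; ring
  rw [this, pow_add]
  push_cast
  field_simp

/-- **Lemma 3 of the paper (Borel–Cantelli estimates for blocks of the uniform empirical
process of α-mixing data).** -/
theorem borel_cantelli_blocks
    {Ω : Type*} [MeasurableSpace Ω] (P : Measure Ω) [IsProbabilityMeasure P]
    (U : ℕ → Ω → ℝ) (hmeas : ∀ i, Measurable (U i))
    (hunif : ∀ i, Measure.map (U i) P = volume.restrict (Set.Icc (0 : ℝ) 1))
    (hmix : Tendsto (alphaCoef P U) atTop (nhds 0))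
    (r C ϑ : ℝ) (hr0 : 0 ≤ r) (hr : r < 1 / 2) (hC : 0 < C) (hϑ : 2 * r < ϑ)
    (hα : ∀ n : ℕ, 1 ≤ n → alphaCoef P U n ≤ C * (n : ℝ) ^ (-ϑ)) :
    ∃ R > r, ∃ β > (0 : ℝ),
      P (Filter.limsup (fun N : ℕ =>
          {ω | (2 : ℝ) ^ ((N : ℝ) * (1 - R)) ≤ ⨆ t : Set.Ioo (0 : ℝ) 1, Zfun U 0 (2 ^ N) t ω})
        atTop) = 0 ∧
      P (Filter.limsup (fun N : ℕ =>
          ⋃ j ∈ Finset.Icc 1 N, ⋃ b ∈ Finset.range (2 ^ (N - j)),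
            {ω | (2 : ℝ) ^ ((N : ℝ) * (1 - R)) * (2 : ℝ) ^ (-(β * ((N : ℝ) - (j : ℝ)))) ≤
              ⨆ t : Set.Ioo (0 : ℝ) 1, Zfun U (2 ^ N + b * 2 ^ j) (2 ^ (j - 1)) t ω})
        atTop) = 0 ∧
      ∀ᵐ ω ∂P,
        (∃ K₁ > (0 : ℝ), ∀ N : ℕ, 1 ≤ N →
          (⨆ t : Set.Ioo (0 : ℝ) 1, Zfun U 0 (2 ^ N) t ω) ≤ K₁ * (2 : ℝ) ^ ((N : ℝ) * (1 - R))) ∧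
        (∃ K₂ > (0 : ℝ), ∀ N : ℕ, 1 ≤ N → ∀ j ∈ Finset.Icc 1 N, ∀ b < 2 ^ (N - j),
          (⨆ t : Set.Ioo (0 : ℝ) 1, Zfun U (2 ^ N + b * 2 ^ j) (2 ^ (j - 1)) t ω) ≤
            K₂ * (2 : ℝ) ^ ((N : ℝ) * (1 - R)) * (2 : ℝ) ^ (-(β * ((N : ℝ) - (j : ℝ))))) := by
  obtain ⟨θ, hθ1, hθ2, hθ3⟩ : ∃ θ, 2 * r < θ ∧ θ < 1 ∧ θ ≤ ϑ := by
    obtain ⟨θ, h1, h2⟩ := exists_between (show 2 * r < min ϑ 1 from lt_min hϑ (by linarith))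
    exact ⟨θ, h1, h2.trans_le (min_le_right _ _), (h2.trans_le (min_le_left _ _)).le⟩
  have hθ0 : 0 < θ := by linarith
  obtain ⟨R, hR1, hR2⟩ := exists_between (show r < θ / 2 by linarith)
  have hα' : ∀ n : ℕ, 1 ≤ n → alphaCoef P U n ≤ C * (n : ℝ) ^ (-θ) := by
    intro n hn
    refine (hα n hn).trans ?_
    have hn' : (1 : ℝ) ≤ n := by exact_mod_cast hn
    have := Real.rpow_le_rpow_of_exponent_le hn' (neg_le_neg hθ3)
    gcongr
  obtain ⟨K, hK, htail⟩ := bc_tail P U hmeas hunif C θ hC hθ0 hθ2 hα'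
  obtain ⟨β, hβ⟩ : ∃ β, β = (1 - θ) / 2 := ⟨_, rfl⟩
  have hβ0 : 0 < β := by rw [hβ]; linarith
  have hsumm := bc_summable K (θ - 2 * R) (by linarith)
  have hx1 : ∀ N : ℕ, (1 : ℝ) ≤ (2 : ℝ) ^ ((N : ℝ) * (1 - R)) := fun N =>
    Real.one_le_rpow (by norm_num) (mul_nonneg (by positivity) (by linarith))
  have hx2 : ∀ N j : ℕ, (1 : ℝ) ≤ (2 : ℝ) ^ ((N : ℝ) * (1 - R)) *
      (2 : ℝ) ^ (-(β * ((N : ℝ) - (j : ℝ)))) := by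
    intro N j
    rw [← Real.rpow_add (by norm_num)]
    apply Real.one_le_rpow (by norm_num)
    have hN : (0 : ℝ) ≤ N := by positivity
    have hj : (0 : ℝ) ≤ j := by positivity
    nlinarith [mul_nonneg hβ0.le hj, mul_nonneg hN (show 0 ≤ 1 - R - β by rw [hβ]; linarith)]
  have hF : P (Filter.limsup (fun N : ℕ =>
          {ω | (2 : ℝ) ^ ((N : ℝ) * (1 - R)) ≤ ⨆ t : Set.Ioo (0 : ℝ) 1, Zfun U 0 (2 ^ N) t ω})
        atTop) = 0 := by
    apply measure_limsup_atTop_eq_zero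
    refine ne_top_of_le_ne_top hsumm (ENNReal.tsum_le_tsum fun N => ?_)
    refine (htail 0 (2 ^ N) N _ Nat.one_le_two_pow le_rfl (hx1 N)).trans ?_
    apply ENNReal.ofReal_le_ofReal
    have e : ((2 ^ N : ℕ) : ℝ) ^ (2 - θ) / ((2 : ℝ) ^ ((N : ℝ) * (1 - R))) ^ 2
        = (2 : ℝ) ^ (-((θ - 2 * R) * N)) := by
      push_cast
      rw [← Real.rpow_natCast 2 N, ← Real.rpow_mul (by norm_num), ← Real.rpow_natCast _ 2,
        ← Real.rpow_mul (by norm_num), ← Real.rpow_sub (by norm_num)]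
      congr 1; push_cast; ring
    rw [mul_div_assoc, e]
    have : ((N : ℝ) + 2) ^ 2 ≤ ((N : ℝ) + 2) ^ 3 :=
      pow_le_pow_right₀ (by linarith [show (0 : ℝ) ≤ N by positivity]) (by norm_num)
    gcongr
  have hH : P (Filter.limsup (fun N : ℕ =>
          ⋃ j ∈ Finset.Icc 1 N, ⋃ b ∈ Finset.range (2 ^ (N - j)),
            {ω | (2 : ℝ) ^ ((N : ℝ) * (1 - R)) * (2 : ℝ) ^ (-(β * ((N : ℝ) - (j : ℝ)))) ≤
              ⨆ t : Set.Ioo (0 : ℝ) 1, Zfun U (2 ^ N + b * 2 ^ j) (2 ^ (j - 1)) t ω})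
        atTop) = 0 := by
    apply measure_limsup_atTop_eq_zero
    refine ne_top_of_le_ne_top hsumm (ENNReal.tsum_le_tsum fun N => ?_)
    have hj : ∀ j ∈ Finset.Icc 1 N, P (⋃ b ∈ Finset.range (2 ^ (N - j)),
            {ω | (2 : ℝ) ^ ((N : ℝ) * (1 - R)) * (2 : ℝ) ^ (-(β * ((N : ℝ) - (j : ℝ)))) ≤
              ⨆ t : Set.Ioo (0 : ℝ) 1, Zfun U (2 ^ N + b * 2 ^ j) (2 ^ (j - 1)) t ω}) ≤
            ENNReal.ofReal (K * ((N : ℝ) + 2) ^ 2 * (2 : ℝ) ^ (-((θ - 2 * R) * N))) := by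
      intro j hj
      obtain ⟨hj1, hjN⟩ := Finset.mem_Icc.1 hj
      refine (measure_biUnion_finset_le _ _).trans ?_
      refine (Finset.sum_le_sum fun b _ => htail (2 ^ N + b * 2 ^ j) (2 ^ (j - 1)) N _
        Nat.one_le_two_pow (Nat.pow_le_pow_right (by norm_num) (by omega)) (hx2 N j)).trans ?_
      rw [Finset.sum_const, Finset.card_range, nsmul_eq_mul, ← ENNReal.ofReal_natCast,
        ← ENNReal.ofReal_mul (by positivity)]
      apply ENNReal.ofReal_le_ofReal
      have e : ((2 ^ (N - j) : ℕ) : ℝ) * (((2 ^ (j - 1) : ℕ) : ℝ) ^ (2 - θ) /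
          ((2 : ℝ) ^ ((N : ℝ) * (1 - R)) * (2 : ℝ) ^ (-(β * ((N : ℝ) - (j : ℝ))))) ^ 2)
          ≤ (2 : ℝ) ^ (-((θ - 2 * R) * N)) := by
        push_cast
        rw [← Real.rpow_natCast 2 (N - j), ← Real.rpow_natCast 2 (j - 1),
          ← Real.rpow_mul (by norm_num), ← Real.rpow_add (by norm_num), ← Real.rpow_natCast _ 2,
          ← Real.rpow_mul (by norm_num), ← Real.rpow_sub (by norm_num),
          ← Real.rpow_add (by norm_num)]
        apply Real.rpow_le_rpow_of_exponent_le (by norm_num)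
        rw [Nat.cast_sub hjN, Nat.cast_sub hj1, hβ]
        push_cast
        nlinarith
      calc _ = K * ((N : ℝ) + 2) ^ 2 * (((2 ^ (N - j) : ℕ) : ℝ) * (((2 ^ (j - 1) : ℕ) : ℝ) ^ (2 - θ) /
          ((2 : ℝ) ^ ((N : ℝ) * (1 - R)) * (2 : ℝ) ^ (-(β * ((N : ℝ) - (j : ℝ))))) ^ 2)) := by ring
        _ ≤ _ := by gcongr
    refine (measure_biUnion_finset_le _ _).trans ((Finset.sum_le_sum hj).trans ?_)
    rw [Finset.sum_const, Nat.card_Icc, nsmul_eq_mul, ← ENNReal.ofReal_natCast,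
        ← ENNReal.ofReal_mul (by positivity)]
    apply ENNReal.ofReal_le_ofReal
    have hN : (0 : ℝ) ≤ N := by positivity
    simp only [Nat.add_sub_cancel]
    calc _ ≤ ((N : ℝ) + 2) * (K * ((N : ℝ) + 2) ^ 2 * (2 : ℝ) ^ (-((θ - 2 * R) * N))) := by
          gcongr; linarith
      _ = _ := by ring
  refine ⟨R, hR1, β, hβ0, hF, hH, ?_⟩
  filter_upwards [measure_eq_zero_iff_ae_notMem.1 hF, measure_eq_zero_iff_ae_notMem.1 hH]
    with ω h1 h2
  rw [mem_limsup_iff_frequently_mem, not_frequently, eventually_atTop] at h1 h2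
  constructor
  · obtain ⟨N0, h1⟩ := h1
    refine ⟨2 ^ N0, by positivity, fun N _ => ?_⟩
    have hone : (1 : ℝ) ≤ 2 ^ N0 := one_le_pow₀ (by norm_num)
    rcases le_total N0 N with h | h
    · have := h1 N h
      rw [mem_ofPred_eq, not_le] at this
      nlinarith [hx1 N]
    · have h3 := bc_sup_le_q U 0 (2 ^ N) ω
      have h4 : ((2 ^ N : ℕ) : ℝ) ≤ 2 ^ N0 := by
        push_cast; exact pow_le_pow_right₀ (by norm_num) h
      nlinarith [hx1 N]
  · obtain ⟨N0, h2⟩ := h2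
    refine ⟨2 ^ N0, by positivity, fun N _ j hj b hb => ?_⟩
    have hone : (1 : ℝ) ≤ 2 ^ N0 := one_le_pow₀ (by norm_num)
    have hx := hx2 N j
    rw [mul_assoc]
    rcases le_total N0 N with h | h
    · have := h2 N h
      have h5 : ω ∉ {ω | (2 : ℝ) ^ ((N : ℝ) * (1 - R)) * (2 : ℝ) ^ (-(β * ((N : ℝ) - (j : ℝ)))) ≤
              ⨆ t : Set.Ioo (0 : ℝ) 1, Zfun U (2 ^ N + b * 2 ^ j) (2 ^ (j - 1)) t ω} := fun h6 =>
        this (Set.mem_biUnion hj (Set.mem_biUnion (Finset.mem_range.2 hb) h6))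
      rw [mem_ofPred_eq, not_le] at h5
      nlinarith
    · have h3 := bc_sup_le_q U (2 ^ N + b * 2 ^ j) (2 ^ (j - 1)) ω
      have h4 : ((2 ^ (j - 1) : ℕ) : ℝ) ≤ 2 ^ N0 := by
        push_cast
        have := (Finset.mem_Icc.1 hj).2
        exact pow_le_pow_right₀ (by norm_num) (by omega)
      nlinarith
end
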